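/- If both S[ω] and S[μ] are integrally closed and fg^i ∉ S^{p∧p²} for every integer 1 ≤ i ≤ p−1, then the integral closure R of S in K is a free S-module (of rank p²). -/

import Mathlib

/-- A height one prime ideal of a commutative ring. -/
def IsHeightOnePrime {S : Type*} [CommRing S] (P : Ideal S) : Prop :=
  ∃ hP : P.IsPrime, Order.height (⟨P, hP⟩ : PrimeSpectrum S) = 1

/-- `c ∈ S` is square free if `P S_P = c S_P` for every height one prime `P` containing `c`. -/
def PaperSquarefree {S : Type*} [CommRing S] (c : S) : Prop :=
  ∀ (P : Ideal S) (hP : P.IsPrime), Order.height (⟨P, hP⟩ : PrimeSpectrum S) = 1 → c ∈ P →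
    haveI := hP
    Ideal.map (algebraMap S (Localization.AtPrime P)) P =
      Ideal.span {algebraMap S (Localization.AtPrime P) c}

/-- Two elements satisfy `𝒜₁` if no height one prime contains both of them. -/
def SatisfiesA1 {S : Type*} [CommRing S] (f g : S) : Prop :=
  ∀ P : Ideal S, IsHeightOnePrime P → ¬(f ∈ P ∧ g ∈ P)

/-- The depth of a module over a local ring: the supremum of the lengths of
regular sequences on `M` contained in the maximal ideal. -/
noncomputable def modDepth (S : Type*) [CommRing S] [IsLocalRing S]
    (M : Type*) [AddCommGroup M] [Module S M] : ℕ∞ :=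
  sSup {n : ℕ∞ | ∃ rs : List S, (rs.length : ℕ∞) = n ∧
    (∀ r ∈ rs, r ∈ IsLocalRing.maximalIdeal S) ∧ RingTheory.Sequence.IsRegular M rs}

/-- A commutative ring is Cohen-Macaulay if each of its localizations at a prime
has depth equal to its Krull dimension. -/
def IsCMRing (R : Type*) [CommRing R] : Prop :=
  ∀ (Q : Ideal R) (hQ : Q.IsPrime),
    haveI := hQ
    (modDepth (Localization.AtPrime Q) (Localization.AtPrime Q) : WithBot ℕ∞) =
      ringKrullDim (Localization.AtPrime Q)

/-- The `n`-th symbolic power of a prime ideal `P`, i.e. `Pⁿ A_P ∩ A`. -/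
noncomputable def symbPow {A : Type*} [CommRing A] (P : Ideal A) (hP : P.IsPrime) (n : ℕ) :
    Ideal A :=
  haveI := hP
  Ideal.comap (algebraMap A (Localization.AtPrime P))
    (Ideal.map (algebraMap A (Localization.AtPrime P)) (P ^ n))

/-- `ω`, as an element of the subalgebra `A = S[ω,μ]`. -/
noncomputable def omegaA {S : Type*} [CommRing S] {K : Type*} [Field K] [Algebra S K]
    (ω μ : K) : Algebra.adjoin S ({ω, μ} : Set K) :=
  ⟨ω, Algebra.subset_adjoin (Set.mem_insert _ _)⟩

/-- `μ`, as an element of the subalgebra `A = S[ω,μ]`. -/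
noncomputable def muA {S : Type*} [CommRing S] {K : Type*} [Field K] [Algebra S K]
    (ω μ : K) : Algebra.adjoin S ({ω, μ} : Set K) :=
  ⟨μ, Algebra.subset_adjoin (Set.mem_insert_of_mem _ rfl)⟩

/-- The ideal `P = (p, ω−h₁, μ−h₂)` of `A = S[ω,μ]`. -/
noncomputable def Pid {S : Type*} [CommRing S] {K : Type*} [Field K] [Algebra S K]
    (p : ℕ) (ω μ : K) (h₁ h₂ : S) : Ideal (Algebra.adjoin S ({ω, μ} : Set K)) :=
  Ideal.span {(p : Algebra.adjoin S ({ω, μ} : Set K)),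
    omegaA ω μ - algebraMap S _ h₁, muA ω μ - algebraMap S _ h₂}

/-- The colon module `(A :_K N) = {x ∈ K : x·N ⊆ A}`, as an `S`-submodule of `K`. -/
noncomputable def colonSubmodule (S : Type*) [CommRing S] (K : Type*) [Field K] [Algebra S K]
    (A : Subalgebra S K) (N : Set K) : Submodule S K where
  carrier := {x : K | ∀ z ∈ N, x * z ∈ A}
  add_mem' := fun hx hy z hz => by
    simpa [add_mul] using add_mem (hx z hz) (hy z hz)
  zero_mem' := fun z hz => by simpa using A.zero_mem
  smul_mem' := fun c x hx z hz => by
    rw [Algebra.smul_def, mul_assoc]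
    exact mul_mem (A.algebraMap_mem c) (hx z hz)

/-- `M` admits a free resolution `0 → Sⁿ → Sᵐ → M → 0`; for a finitely generated
module over a Noetherian local ring this says exactly `pd_S(M) ≤ 1`. -/
def HasFreeResLengthLE1 (S : Type*) [CommRing S] (M : Type*) [AddCommGroup M] [Module S M] :
    Prop :=
  ∃ (n m : ℕ) (φ : (Fin n → S) →ₗ[S] (Fin m → S)) (ψ : (Fin m → S) →ₗ[S] M),
    Function.Injective φ ∧ Function.Surjective ψ ∧ LinearMap.range φ = LinearMap.ker ψ

/-- The ideal `Q` contains an `S`-regular sequence of length three, i.e. `Q` has grade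
(at least) three. -/
def ContainsRegSeq3 (S : Type*) [CommRing S] (Q : Ideal S) : Prop :=
  ∃ rs : List S, rs.length = 3 ∧ (∀ r ∈ rs, r ∈ Q) ∧ RingTheory.Sequence.IsRegular S rs

/-!
Put `π = ω - h₁` and `ρ = μ - h₂`, so that `π ^ p = p * (a - h₁ ^ (p - 1) * π - π ^ 2 * r)` for
some integral `r`, and similarly for `ρ`. The claim is that the `π ^ i * ρ ^ j` with `i + j < p`
and the `π ^ i * ρ ^ j / p` with `p ≤ i + j` form an `S`-basis of the integral closure `R`; the
latter are integral because `π ^ p / p` and `ρ ^ p / p` are.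

Conversely let `x ∈ R`. Trace duality over the integral closures of `S` in `L(ω)` and `L(μ)`,
which are `S[ω]` and `S[μ]`, gives `p * g * x, p * f * x ∈ S[π, ρ]`. No height one prime contains
both `f` and `g`, so `p * x = ∑ sᵢⱼ * π ^ i * ρ ^ j` with `sᵢⱼ ∈ S`, and it remains to prove
`p ∣ sᵢⱼ` for `i + j < p` once the terms with `p ≤ i + j` are removed.

Localize `R` at a prime above `p`. Normality of `S[ω]` forces `p ∤ a`, since otherwise
`π ^ (p - 1) / p` would be integral; thus `π ^ p` is `p` up to a unit, and likewise `ρ ^ p`, so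
`ρ = t * π`. The component of degree `m` is now `π ^ m * Q(t)` with `Q ∈ S[X]` of degree less
than `p`, and one has to show that `π ∣ Q(t)` forces `p ∣ Q`. The residue of `t` is a `p`-th root
of that of `b / a`. If `Q ≠ 0` mod `p` kills it, it is a fraction `C / D` of residues from `S`;
then `f * g ^ i ∉ S^{p∧p²}` makes `(D * t - C) ^ p` a unit multiple of `π`, and `π ∣ Q(t)` shows
that all coefficients of `Q` lie in `p S`, a contradiction.
-/

open Polynomial Module

section Binomial

variable {R : Type*} [CommRing R] {p : ℕ}

theorem exists_add_pow_prime_eq_linear_term (hp : p.Prime) (x y : R) :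
    ∃ r, (x + y) ^ p = x ^ p + y ^ p + p * (x * y ^ (p - 1) + x ^ 2 * r) := by
  refine ⟨y * ∑ k ∈ Finset.Ioo 1 p, x ^ (k - 2) * y ^ (p - k - 1) * (p.choose k / p : ℕ), ?_⟩
  have hIoo : Finset.Ioo 0 p = insert 1 (Finset.Ioo 1 p) := by
    ext k
    have := hp.one_lt
    simp only [Finset.mem_Ioo, Finset.mem_insert]
    omega
  have hpow : y ^ (p - 1) = y * y ^ (p - 1 - 1) := by
    rw [← pow_succ', Nat.sub_add_cancel (Nat.le_sub_one_of_lt hp.one_lt)]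
  have htail : ∑ k ∈ Finset.Ioo 1 p, x ^ (k - 1) * y ^ (p - k - 1) * (p.choose k / p : ℕ) =
      x * ∑ k ∈ Finset.Ioo 1 p, x ^ (k - 2) * y ^ (p - k - 1) * (p.choose k / p : ℕ) := by
    rw [Finset.mul_sum]
    refine Finset.sum_congr rfl fun k hk => ?_
    have hk' : k - 1 = k - 2 + 1 := by have := (Finset.mem_Ioo.1 hk).1; omega
    rw [hk', pow_succ']
    ring
  rw [add_pow_prime_eq hp, hIoo, Finset.sum_insert (by simp), htail, hpow, Nat.choose_one_right,
    Nat.div_self hp.pos]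
  push_cast
  ring

theorem exists_pow_prime_eq_mul_of_add_pow_eq (hp : p.Prime) {x y a : R}
    (h : (x + y) ^ p = y ^ p + a * p) :
    ∃ r, x ^ p = p * (a - y ^ (p - 1) * x - x ^ 2 * r) := by
  obtain ⟨r, hr⟩ := exists_add_pow_prime_eq_linear_term hp x y
  exact ⟨r, by linear_combination h - hr⟩

end Binomial

section Integrality

theorem isIntegral_of_mul_add_pow {S K : Type*} [CommRing S] [CommRing K] [Algebra S K] {x w : K}
    {n : ℕ} (hw : IsIntegral S w) (h : IsIntegral S (x * (x + w) ^ n)) : IsIntegral S x := by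
  let w' : integralClosure S K := ⟨w, hw⟩
  let c' : integralClosure S K := ⟨_, h⟩
  have hmonic : (X * (X + C w') ^ n : (integralClosure S K)[X]).Monic :=
    monic_X.mul ((monic_X_add_C w').pow n)
  nontriviality K
  have : Nontrivial (integralClosure S K) := inferInstance
  have hdeg : (X * (X + C w') ^ n : (integralClosure S K)[X]).natDegree ≠ 0 := by
    rw [monic_X.natDegree_mul ((monic_X_add_C w').pow n), natDegree_X]
    omega
  refine isIntegral_trans x (.of_aeval_monic hmonic hdeg ?_)
  have heval : aeval x (X * (X + C w') ^ n) = algebraMap (integralClosure S K) K c' := by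
    simp only [map_mul, map_pow, map_add, aeval_X, aeval_C]
    rfl
  exact heval ▸ isIntegral_algebraMap

theorem isIntegral_pow_mul_pow_div {S K : Type*} [CommRing S] [Field K] [Algebra S K] {x y q : K}
    {n i j : ℕ} (hy : IsIntegral S (y ^ n)) (hxq : IsIntegral S (x ^ n / q))
    (hyq : IsIntegral S (y ^ n / q)) (hi : i < n) (hij : n ≤ i + j) :
    IsIntegral S (x ^ i * y ^ j / q) := by
  obtain ⟨l, hl⟩ := Nat.exists_eq_add_of_le hi.le
  obtain ⟨k, hk⟩ := Nat.exists_eq_add_of_le (show l ≤ j by omega)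
  have hpow : (x ^ i * y ^ j / q) ^ n = (x ^ n / q) ^ i * (y ^ n / q) ^ l * (y ^ n) ^ k := by
    simp only [div_pow, mul_pow, ← pow_mul]
    rw [div_mul_div_comm, ← pow_add, ← hl, div_mul_eq_mul_div, mul_assoc, ← pow_add, ← mul_add,
      ← hk, mul_comm j, mul_comm i]
  refine IsIntegral.of_pow (n := n) (by omega) ?_
  exact hpow ▸ ((hxq.pow i).mul (hyq.pow l)).mul (hy.pow k)

end Integrality

section HeightOne

theorem mem_colon_mk_iff_exists_algebraMap_eq {S L : Type*} [CommRing S] [CommRing L] [Algebra S L]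
    {z : L} {x : S} :
    x ∈ (⊥ : Submodule S (L ⧸ (1 : Submodule S L))).colon {Submodule.Quotient.mk z} ↔
      ∃ s, algebraMap S L s = algebraMap S L x * z := by
  rw [Submodule.mem_colon_singleton, ← Submodule.Quotient.mk_smul, Submodule.mem_bot,
    Submodule.Quotient.mk_eq_zero, Submodule.mem_one, Algebra.smul_def]

variable {S L : Type*} [CommRing S] [IsDomain S] [IsNoetherianRing S] [IsIntegrallyClosed S]
  [Field L] [Algebra S L] [IsFractionRing S L]

-- If `z P ⊆ P` then `z` would be integral over `S`, hence in `S`, and `P` would be the unit ideal.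
theorem exists_notMem_eq_algebraMap_mul {P : Ideal S} [hP : P.IsPrime] {z : L}
    (hz : ∀ x, x ∈ P ↔ ∃ s, algebraMap S L s = algebraMap S L x * z) :
    ∃ q ∈ P, ∃ u ∉ P, algebraMap S L u = algebraMap S L q * z := by
  by_contra! hcontra
  have hP0 : P ≠ ⊥ := by
    rintro rfl
    obtain ⟨⟨s, d⟩, hsd⟩ := IsLocalization.surj (nonZeroDivisors S) z
    refine nonZeroDivisors.coe_ne_zero d ((hz d).2 ⟨s, ?_⟩)
    rw [← hsd, mul_comm]
  have hint : IsIntegral S z := by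
    refine isIntegral_of_smul_mem_submodule (Submodule.map (Algebra.linearMap S L) P) ?_
      ((IsNoetherian.noetherian P).map _) z ?_
    · rw [← Submodule.map_bot (Algebra.linearMap S L)]
      exact (Submodule.map_injective_of_injective (IsFractionRing.injective S L)).ne hP0
    · rintro _ ⟨q, hq, rfl⟩
      obtain ⟨u, hu⟩ := (hz q).1 hq
      exact ⟨u, by_contra fun huP => hcontra q hq u huP hu, hu.trans (mul_comm _ _)⟩
  obtain ⟨s, hs⟩ := IsIntegrallyClosed.isIntegral_iff.1 hint
  exact hP.ne_top ((Ideal.eq_top_iff_one P).2 ((hz 1).2 ⟨s, by rw [hs, map_one, one_mul]⟩))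

theorem isHeightOnePrime_of_isAssociatedPrime {P : Ideal S}
    (hass : IsAssociatedPrime P (L ⧸ (1 : Submodule S L))) : IsHeightOnePrime P := by
  obtain ⟨hP, zbar, hzbar⟩ := isAssociatedPrime_iff.1 hass
  obtain ⟨z, rfl⟩ := Submodule.Quotient.mk_surjective _ zbar
  have hz x : x ∈ P ↔ ∃ s, algebraMap S L s = algebraMap S L x * z := by
    rw [hzbar, mem_colon_mk_iff_exists_algebraMap_eq]
  obtain ⟨q, hq, u, hu, huq⟩ := exists_notMem_eq_algebraMap_mul hz
  have hminimal : P ∈ (Ideal.span {q}).minimalPrimes := by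
    refine ⟨⟨hP, (Ideal.span_singleton_le_iff_mem P).2 hq⟩, ?_⟩
    rintro J ⟨hJ, hqJ⟩ hJP x hx
    obtain ⟨w, hw⟩ := (hz x).1 hx
    have hxu : x * u = w * q := by
      apply IsFractionRing.injective S L
      rw [map_mul, map_mul, huq, hw]
      ring
    have hxuJ : x * u ∈ J :=
      hxu ▸ J.mul_mem_left w ((Ideal.span_singleton_le_iff_mem J).1 hqJ)
    exact (hJ.mem_or_mem hxuJ).resolve_right fun huJ => hu (hJP huJ)
  have hP0 : P ≠ ⊥ := by
    rintro rfl
    refine hu (?_ : u = 0)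
    apply IsFractionRing.injective S L
    rw [huq, (Ideal.mem_bot).1 hq, map_zero, zero_mul]
  refine ⟨hP, ?_⟩
  rw [← PrimeSpectrum.height_eq_orderHeight]
  refine le_antisymm (Ideal.height_le_one_of_isPrincipal_of_mem_minimalPrimes _ _ hminimal) ?_
  rwa [Order.one_le_iff_pos, pos_iff_ne_zero, Ne, Ideal.height_eq_zero_iff_eq_bot]

theorem SatisfiesA1.exists_algebraMap_eq {f g : S} (hfg : SatisfiesA1 f g) {y : L}
    (hf : ∃ s, algebraMap S L s = algebraMap S L f * y)
    (hg : ∃ s, algebraMap S L s = algebraMap S L g * y) : ∃ s, algebraMap S L s = y := by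
  by_contra hy
  have hy0 : (Submodule.Quotient.mk y : L ⧸ (1 : Submodule S L)) ≠ 0 := by
    rwa [Ne, Submodule.Quotient.mk_eq_zero, Submodule.mem_one]
  obtain ⟨P, hass, hle⟩ := exists_le_isAssociatedPrime_of_isNoetherianRing S _ hy0
  exact hfg P (isHeightOnePrime_of_isAssociatedPrime hass)
    ⟨hle (mem_colon_mk_iff_exists_algebraMap_eq.2 hf),
      hle (mem_colon_mk_iff_exists_algebraMap_eq.2 hg)⟩

theorem satisfiesA1_of_isUnit {R : Type*} [CommRing R] {f : R} (hf : IsUnit f) (g : R) :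
    SatisfiesA1 f g :=
  fun _ ⟨hP, _⟩ ⟨hfP, _⟩ => hP.ne_top (Ideal.eq_top_of_isUnit_mem _ hfP hf)

end HeightOne

section Nonresonance

/-- The expansions `f = h₁ ^ p + a * p` and `g = h₂ ^ p + b * p` are nonresonant if, modulo `p`,
`(C * h₁) ^ (p - 1) ≠ (D * h₂) ^ (p - 1)` for every fraction `C / D` with `b / a = (C / D) ^ p`.
This is the first-order form of the conditions `f * g ^ i ∉ S^{p∧p²}`. -/
def Nonresonant {S : Type*} [CommRing S] (p : ℕ) (a b h₁ h₂ : S) : Prop :=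
  ∀ C D : S, ¬(p : S) ∣ D → (p : S) ∣ D ^ p * b - C ^ p * a →
    ¬(p : S) ∣ (C * h₁) ^ (p - 1) - (D * h₂) ^ (p - 1)

theorem exists_natCast_eq_of_pow_sub_one_eq_one {F : Type*} [Field F] {p : ℕ} (hp : p.Prime)
    [CharP F p] {x : F} (hx : x ^ (p - 1) = 1) : ∃ j : ℕ, 0 < j ∧ j < p ∧ (j : F) = x := by
  have : Fact p.Prime := ⟨hp⟩
  have hxp : x ^ p = x := by rw [← Nat.sub_add_cancel hp.one_le, pow_succ, hx, one_mul]
  obtain ⟨j, hj⟩ : x ∈ (ZMod.castHom dvd_rfl F : ZMod p →+* F).fieldRange :=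
    (bot_le : (⊥ : Subfield F) ≤ _) ((Subfield.mem_bot_iff_pow_eq_self F p).2 hxp)
  refine ⟨j.val, Nat.pos_of_ne_zero fun hj0 => ?_, j.val_lt, by simpa using hj⟩
  rw [← hj, (ZMod.val_eq_zero j).1 hj0, map_zero,
    zero_pow (Nat.sub_ne_zero_of_lt hp.one_lt)] at hx
  exact zero_ne_one hx

-- Resonance forces `D h₂ = j C h₁` with `j ∈ 𝔽ₚ`; take `n = p - j - 1`.
theorem exists_add_natCast_mul_eq_zero_of_resonance {F : Type*} [Field F] {p : ℕ} (hp : p.Prime)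
    [CharP F p] {a b h₁ h₂ C D : F} (hD : D ≠ 0) (hh₂ : h₂ ≠ 0) (hab : D ^ p * b = C ^ p * a)
    (hres : (C * h₁) ^ (p - 1) = (D * h₂) ^ (p - 1)) :
    ∃ n : ℕ, n + 1 < p ∧ a * h₂ ^ p + (n + 1) * b * h₁ ^ p = 0 := by
  have : Fact p.Prime := ⟨hp⟩
  have hDh₂ : (D * h₂) ^ (p - 1) ≠ 0 := pow_ne_zero _ (mul_ne_zero hD hh₂)
  have hCh₁ : C * h₁ ≠ 0 :=
    (pow_ne_zero_iff (Nat.sub_ne_zero_of_lt hp.one_lt)).1 (hres ▸ hDh₂)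
  obtain ⟨j, hj0, hjp, hj⟩ := exists_natCast_eq_of_pow_sub_one_eq_one hp
    (x := D * h₂ / (C * h₁)) (by rw [div_pow, hres, div_self hDh₂])
  have hDC : D ^ p * h₂ ^ p = j * (C ^ p * h₁ ^ p) := by
    have hjfix : (j : F) ^ p = j := map_natCast (frobenius F p) j
    rw [← mul_pow, ← mul_pow, ← (eq_div_iff hCh₁).1 hj, mul_pow (j : F), hjfix]
  obtain ⟨n, hn⟩ : ∃ n, p = n + 1 + j := ⟨p - j - 1, by omega⟩
  refine ⟨n, by omega, mul_left_cancel₀ (pow_ne_zero p hD) ?_⟩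
  have hnj : (n : F) + 1 + j = 0 := by
    rw [← CharP.cast_eq_zero F p, hn]
    push_cast
    rfl
  linear_combination a * hDC + (n + 1) * h₁ ^ p * hab + C ^ p * a * h₁ ^ p * hnj

variable {S : Type*} [CommRing S] {p : ℕ} {a b h₁ h₂ : S}

theorem exists_add_mul_pow_succ_eq (y q : S) (n : ℕ) :
    ∃ r, (y + b * q) ^ (n + 1) = y ^ (n + 1) + (n + 1) * b * q * y ^ n + r * q ^ 2 := by
  obtain ⟨r, hr⟩ := Polynomial.powAddExpansion y (b * q) (n + 1)
  refine ⟨r * b ^ 2, ?_⟩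
  rw [hr, Nat.add_sub_cancel]
  push_cast
  ring

theorem exists_mul_pow_eq_pow_add_of_dvd {n : ℕ}
    (hdvd : (p : S) ∣ h₂ ^ (p * n) * (a * h₂ ^ p + (n + 1) * b * h₁ ^ p)) :
    ∃ x y : S, (h₁ ^ p + a * p) * (h₂ ^ p + b * p) ^ (n + 1) = x ^ p + y * (p : S) ^ 2 := by
  obtain ⟨c, hc⟩ := hdvd
  obtain ⟨r, hr⟩ := exists_add_mul_pow_succ_eq (b := b) (h₂ ^ p) (p : S) n
  refine ⟨h₁ * h₂ ^ (n + 1), c + a * (n + 1) * b * h₂ ^ (p * n) + (h₁ ^ p + a * p) * r, ?_⟩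
  rw [hr]
  linear_combination (p : S) * hc

theorem nonresonant_of_forall_mul_pow_ne (hp : p.Prime) (hp3 : 3 ≤ p) (hpS : Prime (p : S))
    (hnotin : ∀ i : ℕ, 1 ≤ i → i ≤ p - 1 →
      ¬∃ x y : S, (h₁ ^ p + a * p) * (h₂ ^ p + b * p) ^ i = x ^ p + y * (p : S) ^ 2) :
    Nonresonant p a b h₁ h₂ := by
  intro C D hD hab hres
  have hndvd n (hn : n + 1 < p) :
      ¬(p : S) ∣ h₂ ^ (p * n) * (a * h₂ ^ p + (n + 1) * b * h₁ ^ p) := fun hdvd =>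
    hnotin (n + 1) n.succ_pos (Nat.le_sub_one_of_lt hn) (exists_mul_pow_eq_pow_add_of_dvd hdvd)
  have hh₂ : ¬(p : S) ∣ h₂ := fun h =>
    hndvd 1 hp3 ((dvd_pow h (by simp [hp.ne_zero])).mul_right _)
  let P : Ideal S := Ideal.span {(p : S)}
  have : P.IsPrime := (Ideal.span_singleton_prime hpS.ne_zero).2 hpS
  let φ := algebraMap S P.ResidueField
  have hφ s : φ s = 0 ↔ (p : S) ∣ s := by
    rw [Ideal.algebraMap_residueField_eq_zero, Ideal.mem_span_singleton]
  have : CharP P.ResidueField p := by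
    refine (CharP.charP_iff_prime_eq_zero hp).2 ?_
    rw [← map_natCast φ, hφ]
  rw [← hφ] at hab hres
  simp only [map_sub, map_mul, map_pow] at hab hres
  obtain ⟨n, hn, h0⟩ := exists_add_natCast_mul_eq_zero_of_resonance hp (mt (hφ D).1 hD)
    (mt (hφ h₂).1 hh₂) (sub_eq_zero.1 hab) (sub_eq_zero.1 hres)
  refine hndvd n hn (Dvd.dvd.mul_left ((hφ _).1 ?_) _)
  simpa only [map_add, map_mul, map_pow, map_natCast, map_one] using h0

end Nonresonance

section ShiftedRoot

/-- `x + h` is a `p`-th root of `h ^ p + a * p`. For `f = h ^ p + a * p` and `ω ^ p = f` this says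
that `x = ω - h`, the element in which the arithmetic above `p` is expanded. -/
def IsShiftedRoot {S R : Type*} [CommRing S] [CommRing R] [Algebra S R] (p : ℕ) (h a : S) (x : R) :
    Prop :=
  (x + algebraMap S R h) ^ p = algebraMap S R (h ^ p + a * p)

namespace IsShiftedRoot

variable {S R : Type*} [CommRing S] [CommRing R] [Algebra S R] {p : ℕ} {h a : S} {x : R}

theorem exists_pow_eq (hp : p.Prime) (hx : IsShiftedRoot p h a x) :
    ∃ r, x ^ p = p * (algebraMap S R a - algebraMap S R h ^ (p - 1) * x - x ^ 2 * r) :=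
  exists_pow_prime_eq_mul_of_add_pow_eq hp <| by
    rw [hx, map_add, map_mul, map_pow, map_natCast]

theorem isIntegral (hp0 : p ≠ 0) (hx : IsShiftedRoot p h a x) : IsIntegral S x := by
  have hω : IsIntegral S (x + algebraMap S R h) := by
    refine .of_pow (Nat.pos_of_ne_zero hp0) ?_
    rw [hx]
    exact isIntegral_algebraMap
  simpa using hω.sub (isIntegral_algebraMap (x := h))

theorem map {R' : Type*} [CommRing R'] [Algebra S R'] (φ : R →ₐ[S] R')
    (hx : IsShiftedRoot p h a x) : IsShiftedRoot p h a (φ x) := by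
  rw [IsShiftedRoot, ← φ.commutes, ← map_add, ← map_pow, hx, φ.commutes]

end IsShiftedRoot
end ShiftedRoot

section LocalRing

open IsLocalRing

variable {S O : Type*} [CommRing S] [CommRing O] [IsLocalRing O] [Algebra S O]

theorem isUnit_algebraMap_iff_notMem (P : Ideal S) [(maximalIdeal O).LiesOver P] {s : S} :
    IsUnit (algebraMap S O s) ↔ s ∉ P := by
  rw [(maximalIdeal O).mem_of_liesOver P, notMem_maximalIdeal]

theorem coeff_mem_of_pow_dvd_aeval [IsDomain O] (P : Ideal S) [(maximalIdeal O).LiesOver P]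
    {z : O} {n : ℕ} (hz : z ∈ maximalIdeal O) (hz0 : z ≠ 0)
    (hP : ∀ s ∈ P, z ^ n ∣ algebraMap S O s) {Q : S[X]} (hdeg : Q.natDegree < n)
    (hQ : z ^ n ∣ aeval z Q) (i : ℕ) : Q.coeff i ∈ P := by
  induction i using Nat.strong_induction_on with | _ i ih
  by_cases hi : n ≤ i
  · rw [coeff_eq_zero_of_natDegree_lt (hdeg.trans_le hi)]
    exact P.zero_mem
  have hin : z ^ (i + 1) ∣ z ^ n := pow_dvd_pow z (not_le.1 hi)
  rw [aeval_eq_sum_range' hdeg,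
    ← Finset.add_sum_erase _ _ (Finset.mem_range.2 (not_le.1 hi))] at hQ
  have hrest : z ^ (i + 1) ∣ ∑ j ∈ (Finset.range n).erase i, Q.coeff j • z ^ j := by
    refine Finset.dvd_sum fun j hj => ?_
    rw [Algebra.smul_def]
    rcases lt_or_gt_of_ne (Finset.ne_of_mem_erase hj) with hji | hij
    · exact (hin.trans (hP _ (ih j hji))).mul_right _
    · exact (pow_dvd_pow z hij).mul_left _
  have hterm : z ^ i * z ∣ z ^ i * algebraMap S O (Q.coeff i) := by
    rw [← pow_succ, mul_comm (z ^ i), ← Algebra.smul_def]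
    exact (dvd_add_left hrest).1 (hin.trans hQ)
  by_contra hcoeff
  exact (mem_maximalIdeal z).1 hz (isUnit_of_dvd_unit
    ((mul_dvd_mul_iff_left (pow_ne_zero i hz0)).1 hterm)
    ((isUnit_algebraMap_iff_notMem P).2 hcoeff))

theorem exists_map_eq_of_eval₂_eq_zero {k κ : Type*} [Field k] [Field κ] (φ : k →+* κ) {p : ℕ}
    (hp : p.Prime) [CharP κ p] {t : κ} {d : k} (ht : t ^ p = φ d) {Q : k[X]} (hQ : Q ≠ 0)
    (hdeg : Q.natDegree < p) (hQt : eval₂ φ t Q = 0) : ∃ c, φ c = t := by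
  have : Fact p.Prime := ⟨hp⟩
  by_cases hd : ∃ c, c ^ p = d
  · obtain ⟨c, rfl⟩ := hd
    rw [map_pow] at ht
    exact ⟨c, (frobenius_inj κ p ht).symm⟩
  · push Not at hd
    let := φ.toAlgebra
    have hmin : X ^ p - C d = minpoly k t :=
      minpoly.eq_of_irreducible_of_monic (X_pow_sub_C_irreducible_of_prime hp hd)
        (by rw [map_sub, map_pow, aeval_X, aeval_C, ht]; exact sub_self _)
        (monic_X_pow_sub_C d hp.ne_zero)
    have hle := natDegree_le_of_dvd (minpoly.dvd k t hQt) hQ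
    rw [← hmin, natDegree_X_pow_sub_C] at hle
    exact absurd hdeg hle.not_gt

/-- The embedding of residue fields attached to a local ring over a prime `P` of the base. -/
noncomputable def residueFieldEmbedding (P : Ideal S) [P.IsPrime] [(maximalIdeal O).LiesOver P] :
    P.ResidueField →+* ResidueField O :=
  Ideal.ResidueField.lift P (algebraMap S (ResidueField O))
    (fun s hs => by
      rw [RingHom.mem_ker, IsScalarTower.algebraMap_apply S O, ResidueField.algebraMap_eq,
        residue_eq_zero_iff]
      exact ((maximalIdeal O).mem_of_liesOver P s).1 hs)
    (fun s hs => by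
      rw [Submonoid.mem_comap, IsUnit.mem_submonoid_iff, IsScalarTower.algebraMap_apply S O]
      exact ((isUnit_algebraMap_iff_notMem P).2 hs).map _)

theorem residueFieldEmbedding_algebraMap (P : Ideal S) [P.IsPrime] [(maximalIdeal O).LiesOver P]
    (s : S) : residueFieldEmbedding P (algebraMap S P.ResidueField s) =
      residue O (algebraMap S O s) := by
  rw [residueFieldEmbedding, Ideal.ResidueField.lift_algebraMap, IsScalarTower.algebraMap_apply S O,
    ResidueField.algebraMap_eq]

-- The residue of `t` is purely inseparable over the residue field of `P`, and of degree `< p`.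
theorem exists_mul_sub_mem_maximalIdeal_of_aeval_mem (P : Ideal S) [P.IsPrime]
    [(maximalIdeal O).LiesOver P] {p : ℕ} (hp : p.Prime) [CharP (ResidueField O) p] {a b : S}
    (ha : a ∉ P) {t : O} (ht : algebraMap S O a * t ^ p - algebraMap S O b ∈ maximalIdeal O)
    {Q : S[X]} (hQ : ∃ i, Q.coeff i ∉ P) (hdeg : Q.natDegree < p)
    (hQt : aeval t Q ∈ maximalIdeal O) :
    ∃ C D : S, D ∉ P ∧ algebraMap S O D * t - algebraMap S O C ∈ maximalIdeal O := by
  let ι := algebraMap S P.ResidueField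
  let φ : P.ResidueField →+* ResidueField O := residueFieldEmbedding P
  have hφ s : φ (ι s) = residue O (algebraMap S O s) := residueFieldEmbedding_algebraMap P s
  have hι s (hs : s ∉ P) : φ (ι s) ≠ 0 := by
    rw [hφ, residue_ne_zero_iff_isUnit]
    exact (isUnit_algebraMap_iff_notMem P).2 hs
  have hpow : residue O t ^ p = φ (ι b / ι a) := by
    rw [← residue_eq_zero_iff, map_sub, map_mul, map_pow, sub_eq_zero, ← hφ, ← hφ] at ht
    rw [map_div₀, eq_div_iff (hι a ha), mul_comm, ht]
  have hQ0 : Q.map ι ≠ 0 := by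
    obtain ⟨i, hi⟩ := hQ
    refine fun h0 => hi (Ideal.algebraMap_residueField_eq_zero.1 ?_)
    rw [← coeff_map, h0, coeff_zero]
  have hroot : eval₂ φ (residue O t) (Q.map ι) = 0 := by
    rw [eval₂_map, show φ.comp ι = (residue O).comp (algebraMap S O) from RingHom.ext hφ,
      ← hom_eval₂, ← aeval_def]
    exact (residue_eq_zero_iff _).2 hQt
  obtain ⟨c, hc⟩ := exists_map_eq_of_eval₂_eq_zero φ hp hpow hQ0 (natDegree_map_le.trans_lt hdeg)
    hroot
  obtain ⟨Cbar, Dbar, hDbar, rfl⟩ := IsFractionRing.div_surjective (S ⧸ P) c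
  obtain ⟨C, rfl⟩ := Ideal.Quotient.mk_surjective Cbar
  obtain ⟨D, rfl⟩ := Ideal.Quotient.mk_surjective Dbar
  have hD : D ∉ P := fun hD =>
    nonZeroDivisors.ne_zero hDbar (Ideal.Quotient.eq_zero_iff_mem.2 hD)
  refine ⟨C, D, hD, (residue_eq_zero_iff _).1 ?_⟩
  rw [map_div₀, Ideal.algebraMap_quotient_residueField_mk,
    Ideal.algebraMap_quotient_residueField_mk, div_eq_iff (hι D hD)] at hc
  rw [map_sub, map_mul, ← hφ, ← hφ, mul_comm, ← hc, sub_self]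

end LocalRing

section RatioOfRoots

variable {R : Type*} [CommRing R] {p : ℕ}

theorem exists_mul_pow_eq_of_isShiftedRoot_mul {S : Type*} [CommRing S] [IsDomain R] [Algebra S R]
    (hp : p.Prime) (hp0 : (p : R) ≠ 0) {h₁ h₂ a b : S} {t π : R} (hπ : IsShiftedRoot p h₁ a π)
    (hρ : IsShiftedRoot p h₂ b (t * π)) :
    ∃ u w, (algebraMap S R a - algebraMap S R h₁ ^ (p - 1) * π - π ^ 2 * u) * t ^ p =
      algebraMap S R b - algebraMap S R h₂ ^ (p - 1) * (t * π) - (t * π) ^ 2 * w := by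
  obtain ⟨u, hu⟩ := hπ.exists_pow_eq hp
  obtain ⟨w, hw⟩ := hρ.exists_pow_eq hp
  refine ⟨u, w, mul_left_cancel₀ hp0 ?_⟩
  rw [← hw, mul_pow, hu]
  ring

theorem exists_mul_sub_pow_eq (hp : p.Prime) (hodd : Odd p) {a b h₁ h₂ t π u w c C D e : R}
    (hc : (p : R) = π ^ 2 * c)
    (ht : (a - h₁ ^ (p - 1) * π - π ^ 2 * u) * t ^ p =
      b - h₂ ^ (p - 1) * (t * π) - (t * π) ^ 2 * w)
    (he : D ^ p * b - C ^ p * a = p * e) :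
    ∃ r s, (a - h₁ ^ (p - 1) * π - π ^ 2 * u) * (D * t - C) ^ p =
      π * (C * ((C * h₁) ^ (p - 1) - (D * h₂) ^ (p - 1)) + (D * t - C) * r + π * s) := by
  set A := a - h₁ ^ (p - 1) * π - π ^ 2 * u with hA
  obtain ⟨v, hv⟩ := exists_add_pow_prime_eq hp (D * t) (-C)
  have hsub : (D * t - C) ^ p = D ^ p * t ^ p - C ^ p + p * (D * t * -C * v) := by
    rw [sub_eq_add_neg, hv, hodd.neg_pow, mul_pow]
    ring
  have hpow (x : R) : x ^ p = x ^ (p - 1) * x := by rw [← pow_succ, Nat.sub_add_cancel hp.one_le]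
  have hC : C ^ p * h₁ ^ (p - 1) = C * (C * h₁) ^ (p - 1) := by rw [hpow, mul_pow]; ring
  have hD : D ^ p * h₂ ^ (p - 1) = D * (D * h₂) ^ (p - 1) := by rw [hpow, mul_pow]; ring
  refine ⟨-(D * h₂) ^ (p - 1), c * (e + A * (D * t * -C * v)) + C ^ p * u - D ^ p * t ^ 2 * w, ?_⟩
  linear_combination A * hsub + D ^ p * ht + he - C ^ p * hA + π * hC - t * π * hD +
    (e + A * (D * t * -C * v)) * hc

end RatioOfRoots

section LocalArithmetic

open IsLocalRing

variable {S O : Type*} [CommRing S] [CommRing O] [IsLocalRing O] [Algebra S O] {p : ℕ}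

theorem IsShiftedRoot.mem_maximalIdeal {h a : S} {x : O} (hx : IsShiftedRoot p h a x)
    (hp : p.Prime) (hpO : (p : O) ∈ maximalIdeal O) : x ∈ maximalIdeal O := by
  obtain ⟨r, hr⟩ := hx.exists_pow_eq hp
  refine (maximalIdeal.isMaximal O).isPrime.mem_of_pow_mem p ?_
  rw [hr]
  exact Ideal.mul_mem_right _ _ hpO

theorem isUnit_sub_sub_of_mem {a x y : O} (ha : IsUnit a) (hx : x ∈ maximalIdeal O)
    (hy : y ∈ maximalIdeal O) : IsUnit (a - x - y) := by
  rw [← notMem_maximalIdeal] at ha ⊢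
  rw [sub_sub]
  exact fun h => ha ((Submodule.sub_mem_iff_left _ (add_mem hx hy)).1 h)

theorem IsShiftedRoot.associated_pow {h a : S} {x : O} (hx : IsShiftedRoot p h a x)
    (hp : p.Prime) (hpO : (p : O) ∈ maximalIdeal O) (ha : IsUnit (algebraMap S O a)) :
    Associated (x ^ p) (p : O) := by
  have hxm := hx.mem_maximalIdeal hp hpO
  obtain ⟨r, hr⟩ := hx.exists_pow_eq hp
  have hunit := isUnit_sub_sub_of_mem ha (Ideal.mul_mem_left _ (algebraMap S O h ^ (p - 1)) hxm)
    (Ideal.mul_mem_right r _ (Ideal.pow_mem_of_mem _ hxm 2 two_pos))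
  rw [hr]
  exact associated_mul_unit_left _ _ hunit

theorem IsShiftedRoot.dvd [IsDomain O] [IsIntegrallyClosed O] {h h' a a' : S} {x y : O}
    (hx : IsShiftedRoot p h a x) (hy : IsShiftedRoot p h' a' y) (hp : p.Prime)
    (hpO : (p : O) ∈ maximalIdeal O) (ha : IsUnit (algebraMap S O a)) : x ∣ y := by
  rw [← IsIntegrallyClosed.pow_dvd_pow_iff hp.ne_zero,
    (hx.associated_pow hp hpO ha).dvd_iff_dvd_left]
  obtain ⟨r, hr⟩ := hy.exists_pow_eq hp
  exact ⟨_, hr⟩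

theorem natCast_mem_maximalIdeal_of_liesOver (S : Type*) [CommRing S] [Algebra S O]
    [(maximalIdeal O).LiesOver (Ideal.span {(p : S)})] : (p : O) ∈ maximalIdeal O := by
  rw [← map_natCast (algebraMap S O) p,
    ← (maximalIdeal O).mem_of_liesOver (Ideal.span {(p : S)})]
  exact Ideal.mem_span_singleton_self _

variable [(maximalIdeal O).LiesOver (Ideal.span {(p : S)})]

theorem isUnit_algebraMap_iff_not_dvd {s : S} : IsUnit (algebraMap S O s) ↔ ¬(p : S) ∣ s := by
  rw [isUnit_algebraMap_iff_notMem (Ideal.span {(p : S)}), Ideal.mem_span_singleton]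

variable [IsDomain O] {a b h₁ h₂ : S} {t π : O}

theorem Nonresonant.associated_mul_sub_pow (hE : Nonresonant p a b h₁ h₂) (hp : p.Prime)
    (hodd : Odd p) (hpS : Prime (p : S)) (hpO : (p : O) ≠ 0) (ha : ¬(p : S) ∣ a)
    (hb : ¬(p : S) ∣ b) (hπ : IsShiftedRoot p h₁ a π) (hρ : IsShiftedRoot p h₂ b (t * π)) {C D : S}
    (hD : ¬(p : S) ∣ D) (hCD : (p : S) ∣ D ^ p * b - C ^ p * a)
    (hz : algebraMap S O D * t - algebraMap S O C ∈ maximalIdeal O) :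
    Associated ((algebraMap S O D * t - algebraMap S O C) ^ p) π := by
  have hpm : (p : O) ∈ maximalIdeal O := natCast_mem_maximalIdeal_of_liesOver S
  obtain ⟨u, w, ht⟩ := exists_mul_pow_eq_of_isShiftedRoot_mul hp hpO hπ hρ
  obtain ⟨c, hc⟩ : π ^ 2 ∣ (p : O) :=
    (pow_dvd_pow π hp.two_le).trans
      (hπ.associated_pow hp hpm (isUnit_algebraMap_iff_not_dvd.2 ha)).dvd
  obtain ⟨e, he⟩ := hCD
  have he' := congrArg (algebraMap S O) he
  simp only [map_sub, map_mul, map_pow, map_natCast] at he'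
  obtain ⟨r, s, hrs⟩ := exists_mul_sub_pow_eq hp hodd hc ht he'
  have hπm := hπ.mem_maximalIdeal hp hpm
  have hA := isUnit_sub_sub_of_mem (isUnit_algebraMap_iff_not_dvd.2 ha)
    (Ideal.mul_mem_left _ (algebraMap S O h₁ ^ (p - 1)) hπm)
    (Ideal.mul_mem_right u _ (Ideal.pow_mem_of_mem _ hπm 2 two_pos))
  have hC : ¬(p : S) ∣ C := fun hC => by
    have hDb : (p : S) ∣ D ^ p * b := by
      rw [← sub_add_cancel (D ^ p * b) (C ^ p * a), he]
      exact dvd_add (dvd_mul_right _ _) ((dvd_pow hC hp.ne_zero).mul_right a)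
    exact (hpS.dvd_or_dvd hDb).elim (fun h => hD (hpS.dvd_of_dvd_pow h)) hb
  have hE' : IsUnit (algebraMap S O (C * ((C * h₁) ^ (p - 1) - (D * h₂) ^ (p - 1)))) :=
    isUnit_algebraMap_iff_not_dvd.2 fun h =>
      (hpS.dvd_or_dvd h).elim hC (hE C D hD ⟨e, he⟩)
  simp only [map_sub, map_mul, map_pow] at hE'
  have hunit := isUnit_sub_sub_of_mem hE' (Ideal.mul_mem_right (-r) _ hz)
    (Ideal.mul_mem_right (-s) _ hπm)
  rw [mul_neg, mul_neg, sub_neg_eq_add, sub_neg_eq_add] at hunit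
  exact ((associated_unit_mul_left _ _ hA).symm.trans
    (Associated.of_eq hrs)).trans (associated_mul_unit_left _ _ hunit)

theorem aeval_taylor_scaleRoots {A : Type*} [CommRing A] [Algebra S A] (Q : S[X]) (C D : S)
    (t : A) : aeval (algebraMap S A D * t - algebraMap S A C) (taylor C (Q.scaleRoots D)) =
      algebraMap S A D ^ Q.natDegree * aeval t Q := by
  rw [taylor_apply, aeval_comp, map_add, aeval_X, aeval_C, sub_add_cancel, aeval_def,
    scaleRoots_eval₂_mul, aeval_def]

theorem coeff_mem_of_forall_coeff_taylor_scaleRoots_mem {P : Ideal S} [hP : P.IsPrime] {Q : S[X]}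
    {C D : S} (hD : D ∉ P) (hQ : ∀ i, (taylor C (Q.scaleRoots D)).coeff i ∈ P) (i : ℕ) :
    Q.coeff i ∈ P := by
  have h0 : (taylor C (Q.scaleRoots D)).map (Ideal.Quotient.mk P) = 0 := by
    ext j
    rw [coeff_map, coeff_zero, Ideal.Quotient.eq_zero_iff_mem]
    exact hQ j
  rw [map_taylor, taylor_eq_zero] at h0
  have hi : Q.coeff i * D ^ (Q.natDegree - i) ∈ P := by
    rw [← Ideal.Quotient.eq_zero_iff_mem, ← coeff_scaleRoots, ← coeff_map, h0, coeff_zero]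
  exact (hP.mem_or_mem hi).resolve_right fun h => hD (hP.mem_of_pow_mem _ h)

theorem mul_pow_sub_mem_maximalIdeal (hp : p.Prime) (hpO : (p : O) ≠ 0)
    (hπ : IsShiftedRoot p h₁ a π) (hρ : IsShiftedRoot p h₂ b (t * π)) :
    algebraMap S O a * t ^ p - algebraMap S O b ∈ maximalIdeal O := by
  have hπm := hπ.mem_maximalIdeal hp (natCast_mem_maximalIdeal_of_liesOver S)
  obtain ⟨u, w, ht⟩ := exists_mul_pow_eq_of_isShiftedRoot_mul hp hpO hπ hρ
  have hdvd : algebraMap S O a * t ^ p - algebraMap S O b =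
      π * ((algebraMap S O h₁ ^ (p - 1) + π * u) * t ^ p -
        (algebraMap S O h₂ ^ (p - 1) * t + t ^ 2 * π * w)) := by
    linear_combination ht
  rw [hdvd]
  exact Ideal.mul_mem_right _ _ hπm

theorem Nonresonant.dvd_coeff_of_dvd_aeval (hE : Nonresonant p a b h₁ h₂) (hp : p.Prime)
    (hodd : Odd p) (hpS : Prime (p : S)) (hpO : (p : O) ≠ 0) (ha : ¬(p : S) ∣ a)
    (hb : ¬(p : S) ∣ b) (hπ : IsShiftedRoot p h₁ a π) (hρ : IsShiftedRoot p h₂ b (t * π))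
    {Q : S[X]} (hdeg : Q.natDegree < p) (hQ : π ∣ aeval t Q) (i : ℕ) : (p : S) ∣ Q.coeff i := by
  have hpm : (p : O) ∈ maximalIdeal O := natCast_mem_maximalIdeal_of_liesOver S
  have hπm := hπ.mem_maximalIdeal hp hpm
  have hπp := hπ.associated_pow hp hpm (isUnit_algebraMap_iff_not_dvd.2 ha)
  have : CharP (ResidueField O) p := by
    refine (CharP.charP_iff_prime_eq_zero hp).2 ?_
    rwa [← map_natCast (residue O), residue_eq_zero_iff]
  let P : Ideal S := Ideal.span {(p : S)}
  have : P.IsPrime := (Ideal.span_singleton_prime hpS.ne_zero).2 hpS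
  have hPmem s : s ∈ P ↔ (p : S) ∣ s := Ideal.mem_span_singleton
  rw [← hPmem]
  by_contra hi
  have hrel := mul_pow_sub_mem_maximalIdeal hp hpO hπ hρ
  obtain ⟨C, D, hD, hz⟩ := exists_mul_sub_mem_maximalIdeal_of_aeval_mem P hp
    (mt (hPmem a).1 ha) hrel ⟨i, hi⟩ hdeg (Ideal.mem_of_dvd _ hQ hπm)
  have hCD : (p : S) ∣ D ^ p * b - C ^ p * a := by
    rw [← hPmem, (maximalIdeal O).mem_of_liesOver P]
    have hpow := Ideal.mem_of_dvd _
      (sub_dvd_pow_sub_pow (algebraMap S O D * t) (algebraMap S O C) p) hz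
    convert sub_mem (Ideal.mul_mem_left _ (algebraMap S O a) hpow)
      (Ideal.mul_mem_left _ (algebraMap S O D ^ p) hrel) using 1
    simp only [map_sub, map_mul, map_pow]
    ring
  have hzπ := hE.associated_mul_sub_pow hp hodd hpS hpO ha hb hπ hρ (mt (hPmem D).2 hD) hCD hz
  have hπ0 : π ≠ 0 := ne_zero_pow hp.ne_zero (hπp.symm.ne_zero_iff.1 hpO)
  refine hi (coeff_mem_of_forall_coeff_taylor_scaleRoots_mem (C := C) hD
    (coeff_mem_of_pow_dvd_aeval (n := p) P hz (ne_zero_pow hp.ne_zero (hzπ.symm.ne_zero_iff.1 hπ0))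
      (fun s hs => ?_) ?_ ?_) i)
  · have hps := map_dvd (algebraMap S O) ((hPmem s).1 hs)
    rw [map_natCast] at hps
    exact hzπ.dvd.trans ((dvd_pow_self π hp.ne_zero).trans (hπp.dvd.trans hps))
  · rwa [natDegree_taylor, natDegree_scaleRoots]
  · rw [aeval_taylor_scaleRoots]
    exact (hzπ.dvd.trans hQ).mul_left _

theorem dvd_sum_filter_of_dvd_sum {ι R : Type*} [CommRing R] {I : Finset ι} {y : ι → R} {q : R}
    (P : ι → Prop) [DecidablePred P] (hI : q ∣ ∑ i ∈ I, y i) (hP : ∀ i ∈ I, ¬P i → q ∣ y i) :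
    q ∣ ∑ i ∈ I with P i, y i := by
  rw [← Finset.sum_filter_add_sum_filter_not I P] at hI
  exact (dvd_add_left (Finset.dvd_sum fun i hi =>
    hP i (Finset.mem_filter.1 hi).1 (Finset.mem_filter.1 hi).2)).1 hI

theorem pow_succ_dvd_sum_filter_add_eq {R : Type*} [CommRing R] {n m : ℕ} (hm : m < n)
    {q t x : R} (hq : x ^ n ∣ q) {s : Fin n × Fin n → R}
    (hs : q ∣ ∑ ij : Fin n × Fin n with (ij.1 + ij.2 : ℕ) < n,
      s ij * (x ^ (ij.1 : ℕ) * (t * x) ^ (ij.2 : ℕ)))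
    (hlow : ∀ ij : Fin n × Fin n, (ij.1 + ij.2 : ℕ) < m → q ∣ s ij) :
    x ^ (m + 1) ∣ ∑ ij : Fin n × Fin n with (ij.1 + ij.2 : ℕ) = m,
      s ij * (x ^ (ij.1 : ℕ) * (t * x) ^ (ij.2 : ℕ)) := by
  have hmq : x ^ (m + 1) ∣ q := (pow_dvd_pow x hm).trans hq
  have hfilter : ({ij | (ij.1 + ij.2 : ℕ) = m} : Finset (Fin n × Fin n)) =
      {ij ∈ ({ij | (ij.1 + ij.2 : ℕ) < n} : Finset (Fin n × Fin n)) | (ij.1 + ij.2 : ℕ) = m} := by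
    rw [Finset.filter_filter]
    exact Finset.filter_congr fun ij _ => by omega
  rw [hfilter]
  refine dvd_sum_filter_of_dvd_sum _ (hmq.trans hs) fun ij _ hij => ?_
  rcases lt_or_gt_of_ne hij with hlt | hgt
  · exact (hmq.trans (hlow ij hlt)).mul_right _
  · rw [mul_pow, mul_left_comm (x ^ _), ← pow_add]
    exact ((pow_dvd_pow x hgt).mul_left _).mul_left _

-- The homogeneous component of degree `m` is `π ^ m * Q(t)`, so the components can be peeled off
-- in increasing degree.
theorem Nonresonant.dvd_of_dvd_sum (hE : Nonresonant p a b h₁ h₂) (hp : p.Prime)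
    (hodd : Odd p) (hpS : Prime (p : S)) (hpO : (p : O) ≠ 0) (ha : ¬(p : S) ∣ a)
    (hb : ¬(p : S) ∣ b) (hπ : IsShiftedRoot p h₁ a π) (hρ : IsShiftedRoot p h₂ b (t * π))
    {s : Fin p × Fin p → S}
    (hs : (p : O) ∣ ∑ ij : Fin p × Fin p with ij.1 + ij.2 < (p : ℕ),
      algebraMap S O (s ij) * (π ^ (ij.1 : ℕ) * (t * π) ^ (ij.2 : ℕ)))
    {ij : Fin p × Fin p} (hij : (ij.1 + ij.2 : ℕ) < p) : (p : S) ∣ s ij := by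
  have hπp := hπ.associated_pow hp (natCast_mem_maximalIdeal_of_liesOver S)
    (isUnit_algebraMap_iff_not_dvd.2 ha)
  have hπ0 : π ≠ 0 := ne_zero_pow hp.ne_zero (hπp.symm.ne_zero_iff.1 hpO)
  induction hm : (ij.1 + ij.2 : ℕ) using Nat.strong_induction_on generalizing ij with | _ m ih
  let Q : S[X] := ∑ kl : Fin p × Fin p with (kl.1 + kl.2 : ℕ) = m, C (s kl) * X ^ (kl.2 : ℕ)
  have hcoeff : Q.coeff ij.2 = s ij := by
    simp only [Q, finsetSum_coeff, coeff_C_mul_X_pow]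
    rw [Finset.sum_eq_single_of_mem ij (by simpa using hm) ?_, if_pos rfl]
    intro kl hkl hne
    refine if_neg fun h => hne (Prod.ext (Fin.ext ?_) (Fin.ext h.symm))
    have := (Finset.mem_filter.1 hkl).2
    omega
  have hdeg : Q.natDegree < p := by
    refine Nat.lt_of_le_pred hp.pos (natDegree_sum_le_of_forall_le _ _ fun kl _ => ?_)
    exact (natDegree_C_mul_X_pow_le _ _).trans (Nat.le_pred_of_lt kl.2.2)
  have hsum : π ^ m * aeval t Q = ∑ kl : Fin p × Fin p with (kl.1 + kl.2 : ℕ) = m,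
      algebraMap S O (s kl) * (π ^ (kl.1 : ℕ) * (t * π) ^ (kl.2 : ℕ)) := by
    rw [map_sum, Finset.mul_sum]
    refine Finset.sum_congr rfl fun kl hkl => ?_
    rw [← (Finset.mem_filter.1 hkl).2, map_mul, map_pow, aeval_C, aeval_X]
    ring
  have hQ : π ^ m * π ∣ π ^ m * aeval t Q := by
    rw [hsum, ← pow_succ]
    refine pow_succ_dvd_sum_filter_add_eq (hm ▸ hij) hπp.dvd hs fun kl hkl => ?_
    rw [← map_natCast (algebraMap S O)]
    exact map_dvd _ (ih _ hkl (hkl.trans (hm ▸ hij)) rfl)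
  rw [← hcoeff]
  exact hE.dvd_coeff_of_dvd_aeval hp hodd hpS hpO ha hb hπ hρ hdeg
    ((mul_dvd_mul_iff_left (pow_ne_zero m hπ0)).1 hQ) _

end LocalArithmetic

section AdjoinRoots

theorem mem_of_isIntegral_of_mul_mem {S K : Type*} [CommRing S] [Field K] [Algebra S K]
    (B : Subalgebra S K) [IsIntegrallyClosed B] {s x : K} (hx : IsIntegral S x) (hs : s ∈ B)
    (hs0 : s ≠ 0) (hsx : s * x ∈ B) : x ∈ B := by
  let φ : FractionRing B →ₐ[B] K :=
    IsFractionRing.liftAlgHom (g := Algebra.ofId B K) Subtype.val_injective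
  obtain ⟨z, hz⟩ : ∃ z, φ z = x := by
    refine ⟨algebraMap B _ ⟨_, hsx⟩ / algebraMap B _ ⟨s, hs⟩, ?_⟩
    rw [map_div₀, AlgHom.commutes, AlgHom.commutes]
    exact mul_div_cancel_left₀ x hs0
  have hint : IsIntegral B z := by
    rw [← isIntegral_algHom_iff φ φ.injective, hz]
    exact hx.tower_top
  obtain ⟨b, hb⟩ := IsIntegrallyClosed.isIntegral_iff.1 hint
  rw [← hz, ← hb, AlgHom.commutes]
  exact b.2

variable {S L K : Type*} [CommRing S] [IsDomain S] [Field L] [Algebra S L] [IsFractionRing S L]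
  [Field K] [Algebra L K] [Algebra S K] [IsScalarTower S L K]

theorem mem_adjoin_of_isIntegral_of_mem_adjoin {s : Set K}
    [IsIntegrallyClosed (Algebra.adjoin S s)] {x : K} (hx : IsIntegral S x)
    (hxs : x ∈ Algebra.adjoin L s) : x ∈ Algebra.adjoin S s := by
  obtain ⟨d, hd⟩ := multiple_mem_adjoin_of_mem_localization_adjoin (nonZeroDivisors S) L s x hxs
  have : FaithfulSMul S K := .trans S L K
  refine mem_of_isIntegral_of_mul_mem _ hx (Subalgebra.algebraMap_mem _ (d : S)) ?_ ?_
  · exact (map_ne_zero_iff _ (FaithfulSMul.algebraMap_injective S K)).2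
      (nonZeroDivisors.coe_ne_zero d)
  · rwa [← Algebra.smul_def]

theorem finrank_eq_natDegree_minpoly_of_adjoin_eq_top {y : K} (hy : IsIntegral L y)
    (htop : Algebra.adjoin L {y} = ⊤) : finrank L K = (minpoly L y).natDegree := by
  rw [(PowerBasis.ofAdjoinEqTop hy htop).finrank, ← PowerBasis.natDegree_minpoly,
    PowerBasis.ofAdjoinEqTop_gen]

theorem natDegree_minpoly_le_of_pow_eq {y : K} {c : L} {n : ℕ} (hn : n ≠ 0)
    (hy : y ^ n = algebraMap L K c) : (minpoly L y).natDegree ≤ n := by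
  have hroot : aeval y (X ^ n - C c) = 0 := by
    rw [map_sub, map_pow, aeval_X, aeval_C, hy, sub_self]
  have hle := natDegree_le_of_dvd (minpoly.dvd L y hroot) (monic_X_pow_sub_C c hn).ne_zero
  rwa [natDegree_X_pow_sub_C] at hle

theorem minpoly_eq_X_pow_sub_C {y : K} {c : L} {n : ℕ} (hn : n ≠ 0)
    (hy : y ^ n = algebraMap L K c) (hdeg : (minpoly L y).natDegree = n) :
    minpoly L y = X ^ n - C c := by
  have hroot : aeval y (X ^ n - C c) = 0 := by
    rw [map_sub, map_pow, aeval_X, aeval_C, hy, sub_self]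
  have hmonic := monic_X_pow_sub_C c hn
  refine (eq_of_monic_of_dvd_of_natDegree_le (minpoly.monic ⟨_, hmonic, hroot⟩) hmonic
    (minpoly.dvd L y hroot) ?_).symm
  rw [natDegree_X_pow_sub_C, hdeg]

-- `x` lies in the trace dual of `S[y]`, which is `S[y]` divided by the derivative at `y` of
-- `minpoly L y = X ^ n - c`.
theorem natCast_mul_pow_mul_mem_adjoin [IsIntegrallyClosed S] [FiniteDimensional L K]
    [Algebra.IsSeparable L K] {x y : K} {c : S} {n : ℕ} (hn : n ≠ 0)
    (hy : y ^ n = algebraMap S K c) (hdeg : finrank L K = n) (htop : Algebra.adjoin L {y} = ⊤)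
    (hx : IsIntegral S x) : n * y ^ (n - 1) * x ∈ Algebra.adjoin S {y} := by
  have hyS : IsIntegral S y :=
    .of_pow (Nat.pos_of_ne_zero hn) (by rw [hy]; exact isIntegral_algebraMap)
  have hyL : IsIntegral L y := hyS.tower_top
  have hxdual : x ∈ (Algebra.traceForm L K).dualSubmodule
      (Subalgebra.toSubmodule (Algebra.adjoin S {y})) := by
    rw [LinearMap.BilinForm.mem_dualSubmodule]
    intro z hz
    have hzS : IsIntegral S z := adjoin_le_integralClosure hyS hz
    exact Submodule.mem_one.2
      (IsIntegrallyClosed.isIntegral_iff.1 (Algebra.isIntegral_trace (hx.mul hzS)))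
  rw [traceForm_dualSubmodule_adjoin S L htop hyS] at hxdual
  obtain ⟨z, hz, hzx⟩ := hxdual
  have hmin : minpoly L y = X ^ n - C (algebraMap S L c) := by
    refine minpoly_eq_X_pow_sub_C hn (by rw [hy, ← IsScalarTower.algebraMap_apply]) ?_
    rw [← finrank_eq_natDegree_minpoly_of_adjoin_eq_top hyL htop, hdeg]
  have hderiv : aeval y (derivative (minpoly L y)) = n * y ^ (n - 1) := by
    rw [hmin, derivative_sub, derivative_X_pow, derivative_C, sub_zero, map_mul, map_pow, aeval_X,
      aeval_C, map_natCast]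
  have hne : (n * y ^ (n - 1) : K) ≠ 0 :=
    hderiv ▸ (Algebra.IsSeparable.isSeparable L y).aeval_derivative_ne_zero (minpoly.aeval L y)
  have hzx' : n * y ^ (n - 1) * x = z := by
    rw [← hzx, hderiv]
    exact mul_inv_cancel_left₀ hne z
  rw [hzx']
  exact hz

theorem adjoin_eq_top_of_mem_intermediateField {ω μ : K} (M : IntermediateField L K)
    (hω : ω ∈ M) (hgen : Algebra.adjoin L {ω, μ} = ⊤) : Algebra.adjoin M {μ} = ⊤ := by
  have hle : Algebra.adjoin L {ω, μ} ≤ (Algebra.adjoin M {μ}).restrictScalars L := by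
    rw [Algebra.adjoin_le_iff]
    rintro z (rfl | rfl)
    · exact Subalgebra.algebraMap_mem (Algebra.adjoin M {μ}) (⟨z, hω⟩ : M)
    · exact Algebra.subset_adjoin (R := M) rfl
  rw [hgen] at hle
  exact top_unique fun y _ => hle (Algebra.mem_top (x := y))

open IntermediateField in
theorem finrank_adjoin_simple_eq_of_pow_eq [FiniteDimensional L K] {ω μ : K} {c d : L}
    {m n : ℕ} (hm : m ≠ 0) (hn : n ≠ 0) (hω : ω ^ m = algebraMap L K c)
    (hμ : μ ^ n = algebraMap L K d) (hgen : Algebra.adjoin L {ω, μ} = ⊤)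
    (hdeg : finrank L K = m * n) : finrank L⟮ω⟯ K = n := by
  have hM : finrank L L⟮ω⟯ ≤ m := by
    rw [adjoin.finrank (.of_finite L ω)]
    exact natDegree_minpoly_le_of_pow_eq hm hω
  have hK : finrank L⟮ω⟯ K ≤ n := by
    rw [finrank_eq_natDegree_minpoly_of_adjoin_eq_top (.of_finite _ μ)
      (adjoin_eq_top_of_mem_intermediateField _ (mem_adjoin_simple_self L ω) hgen)]
    exact natDegree_minpoly_le_of_pow_eq (c := algebraMap L L⟮ω⟯ d) hn hμ
  refine le_antisymm hK (Nat.le_of_mul_le_mul_left ?_ (Nat.pos_of_ne_zero hm))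
  rw [← hdeg, ← finrank_mul_finrank L L⟮ω⟯ K]
  exact Nat.mul_le_mul_right _ hM

open IntermediateField in
theorem algebraMap_mem_adjoin_of_isIntegral_adjoin_simple {ω : K}
    [IsIntegrallyClosed (Algebra.adjoin S {ω})] (hω : IsIntegral S ω) {y : L⟮ω⟯}
    (hy : IsIntegral S y) : algebraMap L⟮ω⟯ K y ∈ Algebra.adjoin S {ω} := by
  have : IsScalarTower S L⟮ω⟯ K := .of_algebraMap_eq fun _ => rfl
  refine mem_adjoin_of_isIntegral_of_mem_adjoin (L := L) hy.algebraMap ?_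
  rw [← adjoin_simple_toSubalgebra_of_isAlgebraic (hω.tower_top (A := L)).isAlgebraic]
  exact y.2

open IntermediateField in
theorem natCast_mul_pow_mul_mem_adjoin_pair [FiniteDimensional L K] [Algebra.IsSeparable L K]
    {ω μ x : K} {f g : S} {m n : ℕ} (hm : m ≠ 0) (hn : n ≠ 0) (hω : ω ^ m = algebraMap S K f)
    (hμ : μ ^ n = algebraMap S K g) (hgen : Algebra.adjoin L {ω, μ} = ⊤)
    (hdeg : finrank L K = m * n) [IsIntegrallyClosed (Algebra.adjoin S {ω})]
    (hx : IsIntegral S x) : n * μ ^ (n - 1) * x ∈ Algebra.adjoin S {ω, μ} := by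
  let B := integralClosure S L⟮ω⟯
  have : IsScalarTower S L⟮ω⟯ K := .of_algebraMap_eq fun _ => rfl
  have : IsScalarTower S B K := .of_algebraMap_eq fun _ => rfl
  have : IsFractionRing B L⟮ω⟯ := integralClosure.isFractionRing_of_finite_extension L _
  have : IsIntegrallyClosed B := integralClosure.isIntegrallyClosedOfFiniteExtension L
  have hfin : finrank L⟮ω⟯ K = n := finrank_adjoin_simple_eq_of_pow_eq hm hn
    (by rw [hω, IsScalarTower.algebraMap_apply S L K])
    (by rw [hμ, IsScalarTower.algebraMap_apply S L K]) hgen hdeg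
  have hωS : IsIntegral S ω :=
    .of_pow (Nat.pos_of_ne_zero hm) (by rw [hω]; exact isIntegral_algebraMap)
  have hmem := natCast_mul_pow_mul_mem_adjoin (S := B) (c := algebraMap S B g) hn hμ hfin
    (adjoin_eq_top_of_mem_intermediateField _ (mem_adjoin_simple_self L ω) hgen) hx.tower_top
  refine Algebra.adjoin_induction ?_ ?_ (fun _ _ _ _ => add_mem) (fun _ _ _ _ => mul_mem) hmem
  · rintro _ rfl
    exact Algebra.subset_adjoin (by simp)
  · intro y
    exact Algebra.adjoin_mono (by simp)
      (algebraMap_mem_adjoin_of_isIntegral_adjoin_simple hωS y.2)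

end AdjoinRoots

section MonomialBasis

theorem adjoin_insert_add_algebraMap {S A : Type*} [CommRing S] [CommRing A] [Algebra S A] (x : A)
    (h : S) (s : Set A) :
    Algebra.adjoin S (insert (x + algebraMap S A h) s) = Algebra.adjoin S (insert x s) := by
  have hle (y : A) (c : S) :
      Algebra.adjoin S (insert (y + algebraMap S A c) s) ≤ Algebra.adjoin S (insert y s) := by
    refine Algebra.adjoin_le (Set.insert_subset ?_
      ((Set.subset_insert y s).trans Algebra.subset_adjoin))
    exact add_mem (Algebra.subset_adjoin (Set.mem_insert y s)) (Subalgebra.algebraMap_mem _ c)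
  refine le_antisymm (hle x h) ?_
  simpa using hle (x + algebraMap S A h) (-h)

theorem adjoin_pair_add_algebraMap {S A : Type*} [CommRing S] [CommRing A] [Algebra S A] (x y : A)
    (h k : S) :
    Algebra.adjoin S {x + algebraMap S A h, y + algebraMap S A k} = Algebra.adjoin S {x, y} := by
  rw [adjoin_insert_add_algebraMap, Set.pair_comm, adjoin_insert_add_algebraMap, Set.pair_comm]

theorem isIntegrallyClosed_adjoin_add_algebraMap {S A : Type*} [CommRing S] [CommRing A]
    [Algebra S A] (x : A) (h : S) [IsIntegrallyClosed (Algebra.adjoin S {x})] :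
    IsIntegrallyClosed (Algebra.adjoin S {x + algebraMap S A h}) := by
  have heq : Algebra.adjoin S {x + algebraMap S A h} = Algebra.adjoin S {x} := by
    rw [← insert_empty_eq, adjoin_insert_add_algebraMap, insert_empty_eq]
  exact .of_equiv (Subalgebra.equivOfEq _ _ heq.symm).toRingEquiv

namespace IsShiftedRoot

theorem toSubmodule_adjoin_eq_span {S A : Type*} [CommRing S] [Nontrivial S] [CommRing A]
    [Algebra S A] {p : ℕ} {h a : S} {x : A} (hp0 : p ≠ 0) (hx : IsShiftedRoot p h a x) :
    Subalgebra.toSubmodule (Algebra.adjoin S {x}) =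
      Submodule.span S (Set.range fun i : Fin p => x ^ (i : ℕ)) := by
  classical
  have hmonic : ((X + C h) ^ p).Monic := (monic_X_add_C h).pow p
  have hdeg : ((X + C h) ^ p).natDegree = p := by
    rw [(monic_X_add_C h).natDegree_pow, natDegree_X_add_C, mul_one]
  have hmonic' : ((X + C h) ^ p - C (h ^ p + a * p)).Monic := by
    refine hmonic.sub_of_left ((degree_C_le).trans_lt ?_)
    rw [degree_eq_natDegree hmonic.ne_zero, hdeg]
    exact_mod_cast Nat.pos_of_ne_zero hp0
  have hroot : aeval x ((X + C h) ^ p - C (h ^ p + a * p)) = 0 := by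
    rw [map_sub, map_pow, map_add, aeval_X, aeval_C, aeval_C, hx, sub_self]
  rw [← Submodule.span_range_natDegree_eq_adjoin hmonic' hroot, natDegree_sub_C, hdeg,
    Finset.coe_image, Finset.coe_range, ← Fin.range_val, ← Set.range_comp]
  rfl

theorem toSubmodule_adjoin_pair_eq_span {S A : Type*} [CommRing S] [Nontrivial S] [CommRing A]
    [Algebra S A] {p : ℕ} {h a k b : S} {x y : A} (hp0 : p ≠ 0) (hx : IsShiftedRoot p h a x)
    (hy : IsShiftedRoot p k b y) :
    Subalgebra.toSubmodule (Algebra.adjoin S {x, y}) =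
      Submodule.span S (Set.range fun ij : Fin p × Fin p => x ^ (ij.1 : ℕ) * y ^ (ij.2 : ℕ)) := by
  rw [Set.insert_eq, Algebra.adjoin_union_coe_submodule, hx.toSubmodule_adjoin_eq_span hp0,
    hy.toSubmodule_adjoin_eq_span hp0, Submodule.span_mul_span, ← Set.image2_mul,
    Set.image2_range]

variable {S L K : Type*} [CommRing S] [Field L] [Algebra S L] [Field K] [Algebra L K]
  [Algebra S K] [IsScalarTower S L K] {p : ℕ} {a b h₁ h₂ : S} {π ρ : K}

theorem algebraMap_algebraMap {h : S} {x : K} (hx : IsShiftedRoot p h a x) :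
    IsShiftedRoot p (algebraMap S L h) (algebraMap S L a) x := by
  rw [IsShiftedRoot, ← IsScalarTower.algebraMap_apply, hx, ← map_natCast (algebraMap S L),
    ← map_mul, ← map_pow, ← map_add, ← IsScalarTower.algebraMap_apply]

theorem exists_basis (hp0 : p ≠ 0) (hπ : IsShiftedRoot p h₁ a π) (hρ : IsShiftedRoot p h₂ b ρ)
    (hgen : Algebra.adjoin L {π, ρ} = ⊤) (hdeg : finrank L K = p ^ 2) :
    ∃ B : Basis (Fin p × Fin p) L K, ∀ ij, B ij = π ^ (ij.1 : ℕ) * ρ ^ (ij.2 : ℕ) := by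
  have hspan := (hπ.algebraMap_algebraMap (L := L)).toSubmodule_adjoin_pair_eq_span hp0
    (hρ.algebraMap_algebraMap (L := L))
  rw [hgen, Algebra.top_toSubmodule] at hspan
  refine ⟨basisOfTopLeSpanOfCardEqFinrank _ hspan.le ?_, fun ij => ?_⟩
  · rw [hdeg, Fintype.card_prod, Fintype.card_fin, sq]
  · rw [coe_basisOfTopLeSpanOfCardEqFinrank]

variable [IsDomain S] [IsFractionRing S L] [CharZero L]

theorem natCast_mul_algebraMap_mul_mem_adjoin_pair (hp0 : p ≠ 0) (hπ : IsShiftedRoot p h₁ a π)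
    (hρ : IsShiftedRoot p h₂ b ρ) (hgen : Algebra.adjoin L {π, ρ} = ⊤)
    (hdeg : finrank L K = p ^ 2) [IsIntegrallyClosed (Algebra.adjoin S {π})] {x : K}
    (hx : IsIntegral S x) :
    p * algebraMap S K (h₂ ^ p + b * p) * x ∈ Algebra.adjoin S {π, ρ} := by
  have : FiniteDimensional L K :=
    Module.finite_of_finrank_pos (hdeg ▸ pow_pos (Nat.pos_of_ne_zero hp0) 2)
  have := isIntegrallyClosed_adjoin_add_algebraMap π h₁
  have hωgen : Algebra.adjoin L {π + algebraMap S K h₁, ρ + algebraMap S K h₂} = ⊤ := by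
    rw [IsScalarTower.algebraMap_apply S L K, IsScalarTower.algebraMap_apply S L K,
      adjoin_pair_add_algebraMap, hgen]
  have hmem := natCast_mul_pow_mul_mem_adjoin_pair hp0 hp0 hπ hρ hωgen (hdeg.trans (sq p)) hx
  rw [adjoin_pair_add_algebraMap] at hmem
  have hμ : ρ + algebraMap S K h₂ ∈ Algebra.adjoin S {π, ρ} :=
    add_mem (Algebra.subset_adjoin (Set.mem_insert_of_mem _ rfl)) (Subalgebra.algebraMap_mem _ _)
  have hmul : p * algebraMap S K (h₂ ^ p + b * p) * x =
      (ρ + algebraMap S K h₂) * (p * (ρ + algebraMap S K h₂) ^ (p - 1) * x) := by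
    rw [← hρ, ← mul_pow_sub_one hp0]
    ring
  exact hmul ▸ mul_mem hμ hmem

theorem exists_natCast_mul_eq_sum [IsNoetherianRing S] [IsIntegrallyClosed S] (hp0 : p ≠ 0)
    (hπ : IsShiftedRoot p h₁ a π) (hρ : IsShiftedRoot p h₂ b ρ)
    (hgen : Algebra.adjoin L {π, ρ} = ⊤) (hdeg : finrank L K = p ^ 2)
    (hA1 : SatisfiesA1 (h₁ ^ p + a * p) (h₂ ^ p + b * p))
    [IsIntegrallyClosed (Algebra.adjoin S {π})] [IsIntegrallyClosed (Algebra.adjoin S {ρ})]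
    {x : K} (hx : IsIntegral S x) :
    ∃ s : Fin p × Fin p → S,
      p * x = ∑ ij, algebraMap S K (s ij) * (π ^ (ij.1 : ℕ) * ρ ^ (ij.2 : ℕ)) := by
  obtain ⟨B, hB⟩ := hπ.exists_basis hp0 hρ hgen hdeg
  have hrepr {c : S} (hc : p * algebraMap S K c * x ∈ Algebra.adjoin S {π, ρ}) (ij) :
      ∃ s, algebraMap S L s = algebraMap S L c * (p * B.repr x ij) := by
    have hcx : p * algebraMap S K c * x = (algebraMap S L c * p) • x := by
      rw [Algebra.smul_def, map_mul, map_natCast, ← IsScalarTower.algebraMap_apply,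
        mul_comm (p : K)]
    rw [hcx, ← Subalgebra.mem_toSubmodule, hπ.toSubmodule_adjoin_pair_eq_span hp0 hρ,
      ← funext hB, B.mem_span_iff_repr_mem S] at hc
    obtain ⟨s, hs⟩ := hc ij
    exact ⟨s, by rw [hs, map_smul, Finsupp.smul_apply, smul_eq_mul, mul_assoc]⟩
  have hf := hρ.natCast_mul_algebraMap_mul_mem_adjoin_pair hp0 hπ (Set.pair_comm π ρ ▸ hgen) hdeg hx
  rw [Set.pair_comm] at hf
  have hg := hπ.natCast_mul_algebraMap_mul_mem_adjoin_pair hp0 hρ hgen hdeg hx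
  choose s hs using fun ij => hA1.exists_algebraMap_eq (hrepr hf ij) (hrepr hg ij)
  refine ⟨s, ?_⟩
  conv_lhs => rw [← B.sum_repr x, Finset.mul_sum]
  refine Finset.sum_congr rfl fun ij _ => ?_
  rw [← hB, IsScalarTower.algebraMap_apply S L K, hs, map_mul, map_natCast, Algebra.smul_def,
    mul_assoc]

end IsShiftedRoot
end MonomialBasis

section NotDivisible

theorem isUnit_of_smul_eq_of_mem_span {ι S M : Type*} [CommRing S] [AddCommGroup M] [Module S M]
    {v : ι → M} (hv : LinearIndependent S v) {q : S} {y : M} {i : ι}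
    (hy : y ∈ Submodule.span S (Set.range v)) (hqy : q • y = v i) : IsUnit q := by
  have hsingle := hv.repr_eq_single i (q • ⟨y, hy⟩) hqy
  have hone : q * hv.repr ⟨y, hy⟩ i = 1 := by
    rw [← smul_eq_mul, ← Finsupp.smul_apply, ← map_smul, hsingle, Finsupp.single_eq_same]
  exact .of_mul_eq_one _ hone

namespace IsShiftedRoot

variable {S K : Type*} [CommRing S] [Field K] [Algebra S K] {p : ℕ} {h a : S} {x : K}

theorem exists_isIntegral_pow_eq (hp : p.Prime) (hx : IsShiftedRoot p h a x) :
    ∃ r, IsIntegral S r ∧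
      x ^ p = p * (algebraMap S K a - algebraMap S K h ^ (p - 1) * x - x ^ 2 * r) := by
  have hx' : IsShiftedRoot p h a (⟨x, hx.isIntegral hp.ne_zero⟩ : integralClosure S K) :=
    Subtype.ext hx
  obtain ⟨r, hr⟩ := hx'.exists_pow_eq hp
  exact ⟨r, r.2, congrArg Subtype.val hr⟩

theorem isIntegral_pow_div (hp : p.Prime) (hpK : (p : K) ≠ 0) (hx : IsShiftedRoot p h a x) :
    IsIntegral S (x ^ p / p) := by
  obtain ⟨r, hr, hxr⟩ := hx.exists_isIntegral_pow_eq hp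
  have hxS := hx.isIntegral hp.ne_zero
  rw [hxr, mul_div_cancel_left₀ _ hpK]
  exact (isIntegral_algebraMap.sub ((isIntegral_algebraMap.pow _).mul hxS)).sub
    ((hxS.pow 2).mul hr)

-- With `τ = x ^ (p - 1) / p` the equation of `x` reads `x * (τ + w) = p * a`; raising it to the
-- power `p - 1` eliminates `x`.
theorem isIntegral_pow_pred_div (hp : p.Prime) (hpK : (p : K) ≠ 0)
    (hx : IsShiftedRoot p h (p * a) x) : IsIntegral S (x ^ (p - 1) / p) := by
  obtain ⟨r, hr, hxr⟩ := hx.exists_isIntegral_pow_eq hp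
  obtain ⟨n, rfl⟩ := Nat.exists_eq_add_of_le' hp.two_le
  rw [show n + 2 - 1 = n + 1 from rfl, map_mul, map_natCast] at hxr
  rw [show n + 2 - 1 = n + 1 from rfl]
  set q : K := ((n + 2 : ℕ) : K)
  set w := algebraMap S K h ^ (n + 1) + x * r
  have hxτ : x * (x ^ (n + 1) / q + w) = q * algebraMap S K a := by
    rw [mul_add, mul_div_assoc', ← pow_succ', hxr, mul_div_cancel_left₀ _ hpK]
    ring
  have hτ : x ^ (n + 1) / q * (x ^ (n + 1) / q + w) ^ (n + 1) =
      q ^ n * algebraMap S K a ^ (n + 1) := by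
    rw [div_mul_eq_mul_div, ← mul_pow, hxτ, mul_pow, pow_succ' q, mul_assoc,
      mul_div_cancel_left₀ _ hpK]
  refine isIntegral_of_mul_add_pow (w := w) (n := n + 1) ?_ (hτ ▸ ?_)
  · exact (isIntegral_algebraMap.pow _).add ((hx.isIntegral hp.ne_zero).mul hr)
  · exact ((isIntegral_natCast (n + 2)).pow n).mul (isIntegral_algebraMap.pow _)

theorem not_natCast_dvd (hp : p.Prime) (hpK : (p : K) ≠ 0) (hpS : ¬IsUnit (p : S))
    (hx : IsShiftedRoot p h a x) (hli : LinearIndependent S fun i : Fin p => x ^ (i : ℕ))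
    [IsIntegrallyClosed (Algebra.adjoin S {x})] : ¬(p : S) ∣ a := by
  rintro ⟨c, rfl⟩
  have : Nontrivial S := (algebraMap S K).domain_nontrivial
  have hp1 : p - 1 < p := Nat.pred_lt hp.ne_zero
  obtain ⟨τ, hτ, hpτ⟩ : ∃ τ, IsIntegral S τ ∧ p * τ = x ^ (p - 1) :=
    ⟨_, hx.isIntegral_pow_pred_div hp hpK, mul_div_cancel₀ _ hpK⟩
  have hpmem : (p : K) ∈ Algebra.adjoin S {x} := natCast_mem _ p
  have hpτmem : p * τ ∈ Algebra.adjoin S {x} :=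
    hpτ ▸ pow_mem (Algebra.self_mem_adjoin_singleton S x) _
  have hmem := mem_of_isIntegral_of_mul_mem (Algebra.adjoin S {x}) hτ hpmem hpK hpτmem
  refine hpS (isUnit_of_smul_eq_of_mem_span hli (i := ⟨p - 1, hp1⟩)
    ((hx.toSubmodule_adjoin_eq_span hp.ne_zero).le hmem) ?_)
  rw [Algebra.smul_def, map_natCast, hpτ]

end IsShiftedRoot
end NotDivisible

section IntegralClosureBasis

theorem Nonresonant.dvd_of_dvd_sum_of_isIntegral {S R : Type*} [CommRing S] [CommRing R]
    [IsDomain R] [IsIntegrallyClosed R] [Algebra S R] [FaithfulSMul S R] [Algebra.IsIntegral S R]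
    {p : ℕ} {a b h₁ h₂ : S} {π ρ : R} (hE : Nonresonant p a b h₁ h₂) (hp : p.Prime) (hodd : Odd p)
    (hpS : Prime (p : S)) (ha : ¬(p : S) ∣ a) (hb : ¬(p : S) ∣ b) (hπ : IsShiftedRoot p h₁ a π)
    (hρ : IsShiftedRoot p h₂ b ρ) {s : Fin p × Fin p → S}
    (hs : (p : R) ∣ ∑ ij : Fin p × Fin p with ij.1 + ij.2 < (p : ℕ),
      algebraMap S R (s ij) * (π ^ (ij.1 : ℕ) * ρ ^ (ij.2 : ℕ)))
    {ij : Fin p × Fin p} (hij : (ij.1 + ij.2 : ℕ) < p) : (p : S) ∣ s ij := by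
  have : (Ideal.span {(p : S)}).IsPrime := (Ideal.span_singleton_prime hpS.ne_zero).2 hpS
  obtain ⟨Q, hQ, _⟩ := (Ideal.span {(p : S)}).nonempty_primesOver (S := R)
  let O := Localization.AtPrime Q
  have : IsDomain O := IsLocalization.isDomain_localization Q.primeCompl_le_nonZeroDivisors
  have : IsIntegrallyClosed O :=
    isIntegrallyClosed_of_isLocalization _ Q.primeCompl Q.primeCompl_le_nonZeroDivisors
  have : (IsLocalRing.maximalIdeal O).LiesOver (Ideal.span {(p : S)}) := .trans _ Q _
  have hpO : (p : O) ≠ 0 := by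
    rw [← map_natCast (algebraMap R O), ← map_natCast (algebraMap S R), Ne,
      IsLocalization.to_map_eq_zero_iff O Q.primeCompl_le_nonZeroDivisors,
      FaithfulSMul.algebraMap_eq_zero_iff]
    exact hpS.ne_zero
  have hπO := hπ.map (IsScalarTower.toAlgHom S R O)
  have hρO := hρ.map (IsScalarTower.toAlgHom S R O)
  obtain ⟨t, ht⟩ := hπO.dvd hρO hp (natCast_mem_maximalIdeal_of_liesOver S)
    (isUnit_algebraMap_iff_not_dvd.2 ha)
  rw [mul_comm] at ht
  refine hE.dvd_of_dvd_sum hp hodd hpS hpO ha hb hπO (ht ▸ hρO) ?_ hij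
  rw [← ht]
  simpa only [map_natCast, map_sum, map_mul, map_pow, AlgHom.commutes] using
    map_dvd (IsScalarTower.toAlgHom S R O) hs

theorem Nonresonant.dvd_of_sum_eq_natCast_mul {S K : Type*} [CommRing S] [Field K] [Algebra S K]
    [FaithfulSMul S K] {p : ℕ} {a b h₁ h₂ : S} {π ρ z : K} (hE : Nonresonant p a b h₁ h₂)
    (hp : p.Prime) (hodd : Odd p) (hpS : Prime (p : S)) (ha : ¬(p : S) ∣ a) (hb : ¬(p : S) ∣ b)
    (hπ : IsShiftedRoot p h₁ a π) (hρ : IsShiftedRoot p h₂ b ρ) {s : Fin p × Fin p → S}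
    (hz : IsIntegral S z)
    (hs : ∑ ij : Fin p × Fin p with ij.1 + ij.2 < (p : ℕ),
      algebraMap S K (s ij) * (π ^ (ij.1 : ℕ) * ρ ^ (ij.2 : ℕ)) = p * z)
    {ij : Fin p × Fin p} (hij : (ij.1 + ij.2 : ℕ) < p) : (p : S) ∣ s ij := by
  have : IsIntegrallyClosed (integralClosure S K) :=
    .of_isIntegrallyClosed_of_isIntegrallyClosedIn _ K
  have : FaithfulSMul S (integralClosure S K) := .tower_bot S _ K
  have hπR : IsShiftedRoot p h₁ a (⟨π, hπ.isIntegral hp.ne_zero⟩ : integralClosure S K) :=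
    Subtype.ext hπ
  have hρR : IsShiftedRoot p h₂ b (⟨ρ, hρ.isIntegral hp.ne_zero⟩ : integralClosure S K) :=
    Subtype.ext hρ
  refine hE.dvd_of_dvd_sum_of_isIntegral hp hodd hpS ha hb hπR hρR
    ⟨⟨z, hz⟩, Subtype.ext ?_⟩ hij
  simpa using hs

/-- The monomials `x ^ i * y ^ j` with `i, j < p`, divided by `p` as soon as `p ≤ i + j`: the
candidate basis of the integral closure. -/
def scaledMonomial {K : Type*} [Field K] (p : ℕ) (x y : K) (ij : Fin p × Fin p) : K :=
  if (ij.1 + ij.2 : ℕ) < p then x ^ (ij.1 : ℕ) * y ^ (ij.2 : ℕ)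
  else x ^ (ij.1 : ℕ) * y ^ (ij.2 : ℕ) / p

theorem scaledMonomial_eq_mul {K : Type*} [Field K] (p : ℕ) (x y : K) (ij : Fin p × Fin p) :
    scaledMonomial p x y ij =
      (if (ij.1 + ij.2 : ℕ) < p then 1 else (p : K)⁻¹) * (x ^ (ij.1 : ℕ) * y ^ (ij.2 : ℕ)) := by
  rw [scaledMonomial, ite_mul, one_mul, div_eq_inv_mul]

namespace IsShiftedRoot

theorem isIntegral_scaledMonomial {S K : Type*} [CommRing S] [Field K] [Algebra S K] {p : ℕ}
    {a b h₁ h₂ : S} {π ρ : K} (hp : p.Prime) (hpK : (p : K) ≠ 0) (hπ : IsShiftedRoot p h₁ a π)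
    (hρ : IsShiftedRoot p h₂ b ρ) (ij : Fin p × Fin p) :
    IsIntegral S (scaledMonomial p π ρ ij) := by
  have hπS := hπ.isIntegral hp.ne_zero
  have hρS := hρ.isIntegral hp.ne_zero
  rw [scaledMonomial]
  split_ifs with hij
  · exact (hπS.pow _).mul (hρS.pow _)
  · exact isIntegral_pow_mul_pow_div (hρS.pow p) (hπ.isIntegral_pow_div hp hpK)
      (hρ.isIntegral_pow_div hp hpK) ij.1.2 (not_lt.1 hij)

variable {S L K : Type*} [CommRing S] [IsDomain S] [Field L] [CharZero L] [Algebra S L]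
  [IsFractionRing S L] [Field K] [Algebra L K] [Algebra S K] [IsScalarTower S L K] {p : ℕ}
  {a b h₁ h₂ : S} {π ρ : K}

theorem linearIndependent_scaledMonomial (hp0 : p ≠ 0) (hπ : IsShiftedRoot p h₁ a π)
    (hρ : IsShiftedRoot p h₂ b ρ) (hgen : Algebra.adjoin L {π, ρ} = ⊤)
    (hdeg : finrank L K = p ^ 2) : LinearIndependent S (scaledMonomial p π ρ) := by
  obtain ⟨B, hB⟩ := hπ.exists_basis hp0 hρ hgen hdeg
  have hc (ij : Fin p × Fin p) : IsUnit (if (ij.1 + ij.2 : ℕ) < p then 1 else (p : L)⁻¹) := by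
    split_ifs
    · exact isUnit_one
    · exact (inv_ne_zero (Nat.cast_ne_zero.2 hp0)).isUnit
  have heq : scaledMonomial p π ρ = B.isUnitSMul hc := by
    ext ij
    rw [B.isUnitSMul_apply, hB, scaledMonomial_eq_mul, Algebra.smul_def]
    split_ifs <;> simp
  rw [heq]
  exact (B.isUnitSMul hc).linearIndependent.restrict_scalars' S

theorem not_natCast_dvd_of_finrank_eq (hp : p.Prime) (hpS : ¬IsUnit (p : S))
    (hπ : IsShiftedRoot p h₁ a π) (hρ : IsShiftedRoot p h₂ b ρ)
    (hgen : Algebra.adjoin L {π, ρ} = ⊤) (hdeg : finrank L K = p ^ 2)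
    [IsIntegrallyClosed (Algebra.adjoin S {π})] : ¬(p : S) ∣ a := by
  have : CharZero K := charZero_of_injective_algebraMap (algebraMap L K).injective
  obtain ⟨B, hB⟩ := hπ.exists_basis hp.ne_zero hρ hgen hdeg
  refine hπ.not_natCast_dvd hp (Nat.cast_ne_zero.2 hp.ne_zero) hpS ?_
  have hli := (B.linearIndependent.restrict_scalars' S).comp (fun i => (i, ⟨0, hp.pos⟩))
    (Prod.mk_left_injective _)
  convert hli using 2 with i
  simp [hB]

variable [IsNoetherianRing S] [IsIntegrallyClosed S]

-- Subtracting from an integral `x` its part in the `π ^ i * ρ ^ j / p` with `p ≤ i + j` leaves an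
-- integral element `z` with `p * z` supported on the monomials of degree `< p`.
theorem mem_span_scaledMonomial (hp : p.Prime) (hodd : Odd p) (hpS : Prime (p : S))
    (hE : Nonresonant p a b h₁ h₂) (hA1 : SatisfiesA1 (h₁ ^ p + a * p) (h₂ ^ p + b * p))
    (hπ : IsShiftedRoot p h₁ a π) (hρ : IsShiftedRoot p h₂ b ρ)
    (hgen : Algebra.adjoin L {π, ρ} = ⊤) (hdeg : finrank L K = p ^ 2)
    [IsIntegrallyClosed (Algebra.adjoin S {π})] [IsIntegrallyClosed (Algebra.adjoin S {ρ})]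
    {x : K} (hx : IsIntegral S x) :
    x ∈ Submodule.span S (Set.range (scaledMonomial p π ρ)) := by
  have : CharZero K := charZero_of_injective_algebraMap (algebraMap L K).injective
  have : FaithfulSMul S K := .trans S L K
  have hpK : (p : K) ≠ 0 := Nat.cast_ne_zero.2 hp.ne_zero
  have ha := hπ.not_natCast_dvd_of_finrank_eq hp hpS.not_isUnit hρ hgen hdeg
  have hb := hρ.not_natCast_dvd_of_finrank_eq hp hpS.not_isUnit hπ (Set.pair_comm π ρ ▸ hgen) hdeg
  obtain ⟨s, hs⟩ := hπ.exists_natCast_mul_eq_sum hp.ne_zero hρ hgen hdeg hA1 hx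
  have hhigh : ∑ ij : Fin p × Fin p with ¬(ij.1 + ij.2 : ℕ) < p,
      algebraMap S K (s ij) * (π ^ (ij.1 : ℕ) * ρ ^ (ij.2 : ℕ)) =
      p * ∑ ij : Fin p × Fin p with ¬(ij.1 + ij.2 : ℕ) < p, s ij • scaledMonomial p π ρ ij := by
    rw [Finset.mul_sum]
    refine Finset.sum_congr rfl fun ij hij => ?_
    rw [scaledMonomial, if_neg (Finset.mem_filter.1 hij).2, mul_smul_comm, mul_div_cancel₀ _ hpK,
      Algebra.smul_def]
  set y := ∑ ij : Fin p × Fin p with ¬(ij.1 + ij.2 : ℕ) < p, s ij • scaledMonomial p π ρ ij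
  have hy : IsIntegral S y :=
    .sum _ fun ij _ => (hπ.isIntegral_scaledMonomial hp hpK hρ ij).smul _
  have hlow : ∑ ij : Fin p × Fin p with (ij.1 + ij.2 : ℕ) < p,
      algebraMap S K (s ij) * (π ^ (ij.1 : ℕ) * ρ ^ (ij.2 : ℕ)) = p * (x - y) := by
    rw [mul_sub, hs, ← hhigh, eq_sub_iff_add_eq, Finset.sum_filter_add_sum_filter_not]
  choose! c hc using fun ij : Fin p × Fin p =>
    hE.dvd_of_sum_eq_natCast_mul hp hodd hpS ha hb hπ hρ (hx.sub hy) hlow (ij := ij)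
  have hxy : x - y = ∑ ij : Fin p × Fin p with (ij.1 + ij.2 : ℕ) < p,
      c ij • scaledMonomial p π ρ ij := by
    refine mul_left_cancel₀ hpK ?_
    rw [← hlow, Finset.mul_sum]
    refine Finset.sum_congr rfl fun ij hij => ?_
    have hij' := (Finset.mem_filter.1 hij).2
    rw [scaledMonomial, if_pos hij', hc ij hij', map_mul, map_natCast, mul_assoc, Algebra.smul_def]
  have hmem ij : scaledMonomial p π ρ ij ∈ Submodule.span S (Set.range (scaledMonomial p π ρ)) :=
    Submodule.subset_span (Set.mem_range_self ij)
  rw [← sub_add_cancel x y, hxy]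
  exact add_mem (sum_mem fun ij _ => Submodule.smul_mem _ _ (hmem ij))
    (sum_mem fun ij _ => Submodule.smul_mem _ _ (hmem ij))

theorem exists_basis_integralClosure (hp : p.Prime) (hodd : Odd p) (hpS : Prime (p : S))
    (hE : Nonresonant p a b h₁ h₂) (hA1 : SatisfiesA1 (h₁ ^ p + a * p) (h₂ ^ p + b * p))
    (hπ : IsShiftedRoot p h₁ a π) (hρ : IsShiftedRoot p h₂ b ρ)
    (hgen : Algebra.adjoin L {π, ρ} = ⊤) (hdeg : finrank L K = p ^ 2)
    [IsIntegrallyClosed (Algebra.adjoin S {π})] [IsIntegrallyClosed (Algebra.adjoin S {ρ})] :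
    ∃ B : Basis (Fin p × Fin p) S (integralClosure S K),
      ∀ ij, (B ij : K) = scaledMonomial p π ρ ij := by
  have : CharZero K := charZero_of_injective_algebraMap (algebraMap L K).injective
  have hspan : Submodule.span S (Set.range (scaledMonomial p π ρ)) =
      Subalgebra.toSubmodule (integralClosure S K) := by
    refine le_antisymm (Submodule.span_le.2 ?_) fun x hx =>
      hπ.mem_span_scaledMonomial hp hodd hpS hE hA1 hρ hgen hdeg hx
    rintro _ ⟨ij, rfl⟩
    exact hπ.isIntegral_scaledMonomial hp (Nat.cast_ne_zero.2 hp.ne_zero) hρ ij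
  have hli := hπ.linearIndependent_scaledMonomial hp.ne_zero hρ hgen hdeg
  exact ⟨(Basis.span hli).map (LinearEquiv.ofEq _ _ hspan), fun ij =>
    congrArg Subtype.val (Basis.span_apply hli ij)⟩

end IsShiftedRoot
end IntegralClosureBasis

theorem stmt1_general {S : Type*} [CommRing S] [IsDomain S] [IsNoetherianRing S]
    [IsIntegrallyClosed S] {L : Type*} [Field L] [CharZero L] [Algebra S L] [IsFractionRing S L]
    {K : Type*} [Field K] [Algebra L K] [Algebra S K] [IsScalarTower S L K] {p : ℕ} (hp : p.Prime)
    (hp3 : 3 ≤ p) (hpS : Prime (p : S)) {f g h₁ h₂ a b : S} (hf : f = h₁ ^ p + a * p)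
    (hg : g = h₂ ^ p + b * p) (hA1 : SatisfiesA1 f g) {ω μ : K} (hω : ω ^ p = algebraMap S K f)
    (hμ : μ ^ p = algebraMap S K g) (hKgen : Algebra.adjoin L {ω, μ} = ⊤)
    (hdeg : finrank L K = p ^ 2) (hicω : IsIntegrallyClosed (Algebra.adjoin S {ω}))
    (hicμ : IsIntegrallyClosed (Algebra.adjoin S {μ}))
    (hnotin : ∀ i : ℕ, 1 ≤ i → i ≤ p - 1 → ¬∃ x y : S, f * g ^ i = x ^ p + y * (p : S) ^ 2) :
    Module.Free S (integralClosure S K) ∧ finrank S (integralClosure S K) = p ^ 2 := by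
  subst hf hg
  have hE := nonresonant_of_forall_mul_pow_ne hp hp3 hpS hnotin
  have hπ : IsShiftedRoot p h₁ a (ω + algebraMap S K (-h₁)) := by
    rw [IsShiftedRoot, map_neg, neg_add_cancel_right, hω]
  have hρ : IsShiftedRoot p h₂ b (μ + algebraMap S K (-h₂)) := by
    rw [IsShiftedRoot, map_neg, neg_add_cancel_right, hμ]
  have hgen : Algebra.adjoin L {ω + algebraMap S K (-h₁), μ + algebraMap S K (-h₂)} = ⊤ := by
    rw [IsScalarTower.algebraMap_apply S L K, IsScalarTower.algebraMap_apply S L K,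
      adjoin_pair_add_algebraMap, hKgen]
  have := isIntegrallyClosed_adjoin_add_algebraMap ω (-h₁)
  have := isIntegrallyClosed_adjoin_add_algebraMap μ (-h₂)
  have hodd : Odd p := hp.odd_of_ne_two (Nat.ne_of_gt hp3)
  obtain ⟨B, -⟩ := hπ.exists_basis_integralClosure hp hodd hpS hE hA1 hρ hgen hdeg
  refine ⟨.of_basis B, ?_⟩
  rw [finrank_eq_card_basis B, Fintype.card_prod, Fintype.card_fin, sq]

theorem stmt1
    {S : Type*} [CommRing S] [IsDomain S] [IsNoetherianRing S] [IsIntegrallyClosed S]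
    {L : Type*} [Field L] [CharZero L] [Algebra S L] [IsFractionRing S L]
    {K : Type*} [Field K] [Algebra L K] [Algebra S K] [IsScalarTower S L K]
    {p : ℕ} (hp : p.Prime) (hp3 : 3 ≤ p) (hpS : Prime ((p : ℕ) : S))
    (hSmodp : IsIntegrallyClosed (S ⧸ Ideal.span {((p : ℕ) : S)}))
    {f g h₁ h₂ a b : S} (hf : f = h₁ ^ p + a * (p : S)) (hg : g = h₂ ^ p + b * (p : S))
    (hfg : (¬IsUnit f ∧ ¬IsUnit g ∧ PaperSquarefree f ∧ PaperSquarefree g ∧ SatisfiesA1 f g) ∨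
      (IsUnit f ∧ IsUnit g ∧ (∀ x : S, x ^ p ≠ f) ∧ (∀ x : S, x ^ p ≠ g)))
    {ω μ : K} (hω : ω ^ p = algebraMap S K f) (hμ : μ ^ p = algebraMap S K g)
    (hKgen : Algebra.adjoin L ({ω, μ} : Set K) = ⊤)
    (hdeg : Module.finrank L K = p ^ 2)
    (hicω : IsIntegrallyClosed (Algebra.adjoin S ({ω} : Set K)))
    (hicμ : IsIntegrallyClosed (Algebra.adjoin S ({μ} : Set K)))
    (hnotin : ∀ i : ℕ, 1 ≤ i → i ≤ p - 1 → ¬∃ x y : S, f * g ^ i = x ^ p + y * (p : S) ^ 2) :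
    Module.Free S (integralClosure S K) ∧
      Module.finrank S (integralClosure S K) = p ^ 2 := by
  have hA1 : SatisfiesA1 f g := hfg.elim (·.2.2.2.2) fun h => satisfiesA1_of_isUnit h.1 g
  exact stmt1_general hp hp3 hpS hf hg hA1 hω hμ hKgen hdeg hicω hicμ hnotin
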